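/- arXiv:math/0111196 — 7 statements merged into one kernel-verified Lean document; each statement's English description precedes it below -/
import Mathlib

section
/- Let a ≥ 2, k ≥ 1 and l ≥ a be integers. Let S = {x ∈ {-1,0,1}^{l+k} : Σ_{i=1}^{l} x_i + a·Σ_{j=l+1}^{l+k} x_j = 0} (the cut associated to the partition (a^k,1^l)), let π ∈ P(l+k) be the partition whose only non-singleton block is {1,…,a}, let T = {z ∈ {-1,0,1}^{l} : Σ_{i=1}^{l} z_i = 0}, and let ν ∈ P(l) be the partition whose only non-singleton block is {1,…,a}. Then: (i) π↓S = {ρ ∈ P(l+k) : ρ|_{{1,…,l}} ∈ ν↓T}; (ii) S ∖ (π↓S) = {x ∈ {-1,0,1}^{l+k} : Σ_{i=1}^{l} x_i = 0, Σ_{j=l+1}^{l+k} x_j = 0, and |Plus(x_1,…,x_l)| < a}; and (iii) T ∖ (ν↓T) = {z ∈ T : |Plus(z)| < a}, so that S ∖ (π↓S) = {x : (x_1,…,x_l) ∈ T∖(ν↓T) and Σ_{j=l+1}^{l+k} x_j = 0}. -/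
/-- A vector in ℝ^n with all coordinates in {-1,0,1}. -/
def IsCube {n : ℕ} (x : Fin n → ℝ) : Prop := ∀ i, x i = -1 ∨ x i = 0 ∨ x i = 1

def PlusSet {n : ℕ} (x : Fin n → ℝ) : Set (Fin n) := {i | x i = 1}

def MinusSet {n : ℕ} (x : Fin n → ℝ) : Set (Fin n) := {i | x i = -1}

/-- An `n`-cut: a span-closed subset of {-1,0,1}^n all of whose nonzero elements
have nonempty Plus and Minus sets. -/
def IsCut {n : ℕ} (S : Set (Fin n → ℝ)) : Prop :=
  (∀ x ∈ S, IsCube x) ∧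
  ((Submodule.span ℝ S : Set (Fin n → ℝ)) ∩ {x | IsCube x}) = S ∧
  ∀ x ∈ S, x ≠ 0 → (PlusSet x).Nonempty ∧ (MinusSet x).Nonempty
/-- The multiset of coordinates where `x` equals 1 (each appearing once). -/
noncomputable def plusM {n : ℕ} (x : Fin n → ℝ) : Multiset (Fin n) :=
  (Finset.univ.filter (fun i => x i = 1)).val

/-- The multiset of coordinates where `x` equals -1 (each appearing once). -/
noncomputable def minusM {n : ℕ} (x : Fin n → ℝ) : Multiset (Fin n) :=
  (Finset.univ.filter (fun i => x i = -1)).val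

/-- One step of the closure operation `⇓S` on collections of multisubsets of `[n]`:
(2) merge two blocks; (3) replace, inside one block, one copy of each element of
`Plus(x)` by one copy of each element of `Minus(x)`, for some `x ∈ S`. -/
inductive DownStep {n : ℕ} (S : Set (Fin n → ℝ)) :
    Multiset (Multiset (Fin n)) → Multiset (Multiset (Fin n)) → Prop
  | merge (B₁ B₂ : Multiset (Fin n)) (rest : Multiset (Multiset (Fin n))) :
      DownStep S (B₁ ::ₘ B₂ ::ₘ rest) ((B₁ + B₂) ::ₘ rest)
  | swap (B₁ : Multiset (Fin n)) (rest : Multiset (Multiset (Fin n))) (x : Fin n → ℝ)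
      (hx : x ∈ S) (hsub : plusM x ≤ B₁) :
      DownStep S (B₁ ::ₘ rest) ((B₁ - plusM x + minusM x) ::ₘ rest)

/-- A multiset of multisets of `[n]` which is an honest partition of `[n]`:
all blocks nonempty, globally no repetitions, and every element covered. -/
def IsPartitionM {n : ℕ} (A : Multiset (Multiset (Fin n))) : Prop :=
  (∀ B ∈ A, B ≠ 0) ∧ A.sum.Nodup ∧ ∀ i : Fin n, i ∈ A.sum

/-- `π ↓ S`: the set of honest partitions of `[n]` reachable from `π` by `⇓S`-steps. -/
def downClos {n : ℕ} (S : Set (Fin n → ℝ)) (π : Multiset (Multiset (Fin n))) :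
    Set (Multiset (Multiset (Fin n))) :=
  {ρ | IsPartitionM ρ ∧ Relation.ReflTransGen (DownStep S) π ρ}

/-- The partition of `[n]` whose only non-singleton blocks are `Plus(s)` and `Minus(s)`. -/
noncomputable def partOf {n : ℕ} (s : Fin n → ℝ) : Multiset (Multiset (Fin n)) :=
  plusM s ::ₘ minusM s ::ₘ
    ((Finset.univ.filter (fun i => s i = 0)).val.map (fun i => ({i} : Multiset (Fin n))))

/-- `S ∖ Π`: remove from `S` every element `s` whose associated partition
(non-singleton blocks `Plus(s)`, `Minus(s)`) lies in `Π`. -/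
noncomputable def cutMinus {n : ℕ} (S : Set (Fin n → ℝ))
    (P : Set (Multiset (Multiset (Fin n)))) : Set (Fin n → ℝ) :=
  {s | s ∈ S ∧ partOf s ∉ P}

/-- The partition of `[n]` whose only (potentially) non-singleton block is `A`. -/
def onlyBlock {n : ℕ} (A : Finset (Fin n)) : Multiset (Multiset (Fin n)) :=
  A.val ::ₘ ((Finset.univ \ A).val.map (fun i => ({i} : Multiset (Fin n))))

/-- Restriction of a partition of `[n]` to the first `l` coordinates `{0,…,l-1}`. -/
def restrictFirst {n : ℕ} (l : ℕ) (ρ : Multiset (Multiset (Fin n))) :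
    Multiset (Multiset (Fin l)) :=
  (ρ.map (fun B => B.filterMap
    (fun i => if h : (i : ℕ) < l then some (⟨(i : ℕ), h⟩ : Fin l) else none))).filter
    (fun B => B ≠ 0)

/-- The cut associated to the partition `(a^k, 1^l)`: first `l` coordinates have
weight 1, last `k` coordinates have weight `a`. -/
noncomputable def SAK (a k l : ℕ) : Set (Fin (l + k) → ℝ) :=
  {x | IsCube x ∧ ∑ i : Fin (l + k), (if (i : ℕ) < l then 1 else (a : ℝ)) * x i = 0}

/-- The cut associated to the partition `(1^l)`. -/
noncomputable def TOnes (l : ℕ) : Set (Fin l → ℝ) :=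
  {z | IsCube z ∧ ∑ i, z i = 0}

/-- The partition of `[n]` whose only non-singleton block is `{0,…,a-1}`. -/
def firstBlock (a n : ℕ) : Multiset (Multiset (Fin n)) :=
  onlyBlock (Finset.univ.filter (fun i : Fin n => (i : ℕ) < a))

/-!
Call `i` a unit if its weight is `1`, and suppose that every other weight is a multiple of `a`.
Modulo `a` the weight of a block is its number of units, a step of `⇓S` either merges two blocks or
preserves the weight of each block, and `(p + q) % a ≤ p % a + q % a`. So the sum over the blocks of
the weights modulo `a` never increases. For `π` the block `{1,…,a}` contributes `0`, so this sum is
smaller than the total number of units by at least `a`; for a partition all of whose blocks have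
fewer than `a` units it is that total number. Hence every partition in `π↓S` has a block with at
least `a` units.
Conversely, elements of equal weight can be exchanged using the vectors `e_i - e_j` of the cut, so
`{1,…,a}` can be turned into any `a` units inside a block of the target, and the rest is merging.

For the relative cut, `Plus(x)` and `Minus(x)` have equal weight, hence congruent numbers of units
modulo `a`; if both numbers are less than `a`, they agree.
-/

section Reachability

variable {n : ℕ} {S : Set (Fin n → ℝ)}

theorem DownStep.add_right {A A' : Multiset (Multiset (Fin n))}
    (h : DownStep S A A') (R : Multiset (Multiset (Fin n))) : DownStep S (A + R) (A' + R) := by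
  cases h with
  | merge B₁ B₂ rest => simpa using DownStep.merge B₁ B₂ (rest + R)
  | swap B₁ rest x hx hsub => simpa using DownStep.swap B₁ (rest + R) x hx hsub

/-- `Reaches S A A'` says that `A'` belongs to the family `A⇓S`. -/
abbrev Reaches (S : Set (Fin n → ℝ)) :
    Multiset (Multiset (Fin n)) → Multiset (Multiset (Fin n)) → Prop :=
  Relation.ReflTransGen (DownStep S)

namespace Reaches

theorem add_right {A A' : Multiset (Multiset (Fin n))} (h : Reaches S A A')
    (R : Multiset (Multiset (Fin n))) : Reaches S (A + R) (A' + R) :=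
  Relation.ReflTransGen.lift (p := DownStep S) (· + R) (fun _ _ h => h.add_right R) _ _ h

theorem add {A A' R R' : Multiset (Multiset (Fin n))} (h : Reaches S A A')
    (h' : Reaches S R R') : Reaches S (A + R) (A' + R') := by
  refine (h.add_right R).trans ?_
  rw [add_comm A', add_comm A']
  exact h'.add_right A'

theorem merge_all (B : Multiset (Fin n)) (A : Multiset (Multiset (Fin n))) :
    Reaches S (B ::ₘ A) {(B ::ₘ A).sum} := by
  induction A using Multiset.induction_on generalizing B with
  | empty => simpa using Relation.ReflTransGen.refl
  | cons C A ih => simpa [add_assoc] using (ih (B + C)).head (DownStep.merge B C A)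

theorem map_singleton_sum {ρ : Multiset (Multiset (Fin n))} (hρ : 0 ∉ ρ) :
    Reaches S (ρ.sum.map fun i => {i}) ρ := by
  induction ρ using Multiset.induction_on with
  | empty => simpa using Relation.ReflTransGen.refl
  | cons B ρ ih =>
    rw [Multiset.mem_cons, not_or] at hρ
    obtain ⟨i, hi⟩ := Multiset.exists_mem_of_ne_zero (Ne.symm hρ.1)
    obtain ⟨C, rfl⟩ := Multiset.exists_cons_of_mem hi
    have hmerge := merge_all (S := S) {i} (C.map fun j => {j})
    simpa using hmerge.add (ih hρ.2)

end Reaches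

theorem isPartitionM_iff {ρ : Multiset (Multiset (Fin n))} :
    IsPartitionM ρ ↔ 0 ∉ ρ ∧ ρ.sum = (Finset.univ : Finset (Fin n)).val := by
  refine and_congr ⟨fun h h0 => h 0 h0 rfl, fun h B hB hB0 => h (hB0 ▸ hB)⟩
    ⟨fun h => ?_, fun h => by simp [h, Finset.univ.nodup]⟩
  exact (Multiset.Nodup.ext h.1 Finset.univ.nodup).2 fun i => by simp [h.2 i]

theorem val_add_val_univ_sdiff (A : Finset (Fin n)) :
    A.val + (Finset.univ \ A).val = (Finset.univ : Finset (Fin n)).val := by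
  rw [Finset.sdiff_val]
  exact add_tsub_cancel_of_le (Finset.val_le_iff.2 A.subset_univ)

theorem Reaches.of_le_block {ρ : Multiset (Multiset (Fin n))} (hρ : IsPartitionM ρ)
    {A : Finset (Fin n)} {B : Multiset (Fin n)} (hB : B ∈ ρ) (hAB : A.val ≤ B) :
    Reaches S (onlyBlock A) ρ := by
  obtain ⟨ρ, rfl⟩ := Multiset.exists_cons_of_mem hB
  obtain ⟨C, rfl⟩ := Multiset.le_iff_exists_add.1 hAB
  obtain ⟨hne, hsum⟩ := isPartitionM_iff.1 hρ
  have hcompl : (Finset.univ \ A).val = C + ρ.sum := by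
    rwa [← val_add_val_univ_sdiff A, Multiset.sum_cons, add_assoc, add_right_inj, eq_comm] at hsum
  have hmerge := merge_all (S := S) A.val (C.map fun i => {i})
  have hrest := map_singleton_sum (S := S) (ρ := ρ) fun h => hne (Multiset.mem_cons_of_mem h)
  simpa [onlyBlock, hcompl] using hmerge.add hrest

end Reachability

section Weights

variable {n : ℕ} {w : Fin n → ℕ}

/-- The vectors in `{-1,0,1}^n` that are orthogonal to `w`. For positive weights this is the cut
associated to the partition with parts `w i`. -/
def weightCut (w : Fin n → ℕ) : Set (Fin n → ℝ) :=
  {x | IsCube x ∧ ∑ i, (w i : ℝ) * x i = 0}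

/-- The total weight of a block, counted with multiplicity. -/
def blockWeight (w : Fin n → ℕ) (B : Multiset (Fin n)) : ℕ :=
  (B.map w).sum

theorem blockWeight_cons (i : Fin n) (B : Multiset (Fin n)) :
    blockWeight w (i ::ₘ B) = w i + blockWeight w B := by
  simp [blockWeight]

theorem blockWeight_add (B C : Multiset (Fin n)) :
    blockWeight w (B + C) = blockWeight w B + blockWeight w C := by
  simp [blockWeight]

theorem IsCube.sum_mul_eq_zero_iff {x : Fin n → ℝ} (hx : IsCube x) :
    ∑ i, (w i : ℝ) * x i = 0 ↔ blockWeight w (plusM x) = blockWeight w (minusM x) := by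
  have hsum : ∑ i, (w i : ℝ) * x i =
      (∑ i with x i = 1, w i : ℕ) - (∑ i with x i = -1, w i : ℕ) := by
    rw [Finset.sum_filter, Finset.sum_filter, Nat.cast_sum, Nat.cast_sum,
      ← Finset.sum_sub_distrib]
    refine Finset.sum_congr rfl fun i _ => ?_
    rcases hx i with h | h | h <;> norm_num [h]
  rw [hsum, sub_eq_zero, Nat.cast_inj]
  rfl

theorem blockWeight_plusM_eq_minusM {x : Fin n → ℝ} (hx : x ∈ weightCut w) :
    blockWeight w (plusM x) = blockWeight w (minusM x) :=
  hx.1.sum_mul_eq_zero_iff.1 hx.2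

theorem plusM_single_sub_single {i j : Fin n} (hij : i ≠ j) :
    plusM (Pi.single i 1 - Pi.single j 1) = {i} := by
  rw [plusM, ← Finset.singleton_val]
  congr 1
  ext m
  rcases eq_or_ne m i with rfl | hmi
  · simp [hij]
  · rcases eq_or_ne m j with rfl | hmj <;> norm_num [*]

theorem minusM_single_sub_single {i j : Fin n} (hij : i ≠ j) :
    minusM (Pi.single i 1 - Pi.single j 1) = {j} := by
  rw [← plusM_single_sub_single hij.symm, plusM, minusM, ← neg_sub]
  simp only [Pi.neg_apply, neg_inj]

theorem single_sub_single_mem_weightCut {i j : Fin n} (hw : w i = w j) :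
    Pi.single i 1 - Pi.single j 1 ∈ weightCut w := by
  refine ⟨fun m => ?_, by simp [mul_sub, Pi.single_apply, hw]⟩
  rw [Pi.sub_apply, Pi.single_apply, Pi.single_apply]
  split_ifs <;> norm_num

theorem Reaches.exchange {i j : Fin n} (hw : w i = w j) (B : Multiset (Fin n)) :
    Reaches (weightCut w) {i ::ₘ B} {j ::ₘ B} := by
  rcases eq_or_ne i j with rfl | hij
  · exact Relation.ReflTransGen.refl
  have hstep := DownStep.swap (i ::ₘ B) 0 _ (single_sub_single_mem_weightCut hw)
    (by simp [plusM_single_sub_single hij])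
  rw [plusM_single_sub_single hij, minusM_single_sub_single hij, Multiset.sub_singleton,
    Multiset.erase_cons_head, add_comm, Multiset.singleton_add] at hstep
  exact Relation.ReflTransGen.single hstep

theorem Reaches.block_of_map_eq {B B' : Multiset (Fin n)} (h : B.map w = B'.map w) :
    Reaches (weightCut w) {B} {B'} := by
  suffices ∀ C, Reaches (weightCut w) {B + C} {B' + C} by simpa using this 0
  have hrel : Multiset.Rel (fun i j => w i = w j) B B' :=
    Multiset.rel_map.1 (Multiset.rel_eq.2 h)
  clear h
  induction hrel with
  | zero => exact fun C => Relation.ReflTransGen.refl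
  | @cons i j B B' hij _ ih =>
    intro C
    simpa using (exchange hij (B + C)).trans (by simpa using ih (j ::ₘ C))

theorem Reaches.of_map_map_eq {A A' : Multiset (Multiset (Fin n))}
    (h : A.map (Multiset.map w) = A'.map (Multiset.map w)) : Reaches (weightCut w) A A' := by
  have hrel : Multiset.Rel (fun B B' => B.map w = B'.map w) A A' :=
    Multiset.rel_map.1 (Multiset.rel_eq.2 h)
  clear h
  induction hrel with
  | zero => exact Relation.ReflTransGen.refl
  | cons hB _ ih =>
    rw [← Multiset.singleton_add, ← Multiset.singleton_add]
    exact (block_of_map_eq hB).add ih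

theorem Reaches.onlyBlock_of_map_eq {A A' : Finset (Fin n)} (h : A.val.map w = A'.val.map w) :
    Reaches (weightCut w) (onlyBlock A) (onlyBlock A') := by
  have hcompl : (Finset.univ \ A).val.map w = (Finset.univ \ A').val.map w := by
    rw [← add_right_inj (A.val.map w), ← Multiset.map_add, val_add_val_univ_sdiff, h,
      ← Multiset.map_add, val_add_val_univ_sdiff]
  refine of_map_map_eq ?_
  have hsingletons := congrArg (Multiset.map fun v => ({v} : Multiset ℕ)) hcompl
  simpa [onlyBlock, h, Function.comp_def] using hsingletons

end Weights

section Residues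

open scoped Finset

variable {n a : ℕ} {w : Fin n → ℕ}

/-- The invariant of the reachability argument: the sum over the blocks of their weights modulo
`a`. -/
def residueSum (a : ℕ) (w : Fin n → ℕ) (A : Multiset (Multiset (Fin n))) : ℕ :=
  (A.map fun B => blockWeight w B % a).sum

theorem residueSum_cons (B : Multiset (Fin n)) (A : Multiset (Multiset (Fin n))) :
    residueSum a w (B ::ₘ A) = blockWeight w B % a + residueSum a w A := by
  simp [residueSum]

theorem DownStep.residueSum_le {A A' : Multiset (Multiset (Fin n))}
    (h : DownStep (weightCut w) A A') : residueSum a w A' ≤ residueSum a w A := by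
  cases h with
  | merge B₁ B₂ rest =>
    simp only [residueSum_cons, blockWeight_add, ← add_assoc]
    gcongr
    exact (Nat.add_mod _ _ a).trans_le (Nat.mod_le _ a)
  | swap B₁ rest x hx hsub =>
    obtain ⟨C, rfl⟩ := Multiset.le_iff_exists_add.1 hsub
    simp only [residueSum_cons, add_tsub_cancel_left, blockWeight_add,
      blockWeight_plusM_eq_minusM hx, add_comm (blockWeight w C), le_refl]

theorem Reaches.residueSum_le {A A' : Multiset (Multiset (Fin n))}
    (h : Reaches (weightCut w) A A') : residueSum a w A' ≤ residueSum a w A := by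
  induction h with
  | refl => exact le_rfl
  | tail _ hstep ih => exact hstep.residueSum_le.trans ih

/-- The number of elements of weight `1` of a block, counted with multiplicity. -/
def unitCount (w : Fin n → ℕ) (B : Multiset (Fin n)) : ℕ :=
  B.countP fun i => w i = 1

theorem unitCount_cons (i : Fin n) (B : Multiset (Fin n)) :
    unitCount w (i ::ₘ B) = unitCount w B + if w i = 1 then 1 else 0 :=
  Multiset.countP_cons _ _ _

theorem unitCount_add (B C : Multiset (Fin n)) :
    unitCount w (B + C) = unitCount w B + unitCount w C :=
  Multiset.countP_add _ _ _

theorem unitCount_val (A : Finset (Fin n)) : unitCount w A.val = #{i ∈ A | w i = 1} :=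
  Multiset.countP_eq_card_filter _ _

theorem unitCount_eq_blockWeight (B : Multiset (Fin n)) :
    unitCount w B = blockWeight (fun i => if w i = 1 then 1 else 0) B := by
  induction B using Multiset.induction_on with
  | empty => rfl
  | cons i B ih => rw [unitCount_cons, blockWeight_cons, ih, add_comm]

theorem unitCount_le_blockWeight (B : Multiset (Fin n)) : unitCount w B ≤ blockWeight w B := by
  rw [unitCount_eq_blockWeight]
  exact Multiset.sum_map_le_sum_map _ _ fun i _ => by split_ifs <;> omega

theorem blockWeight_modEq_unitCount (hw : ∀ i, w i = 1 ∨ a ∣ w i) (B : Multiset (Fin n)) :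
    blockWeight w B ≡ unitCount w B [MOD a] := by
  induction B using Multiset.induction_on with
  | empty => rfl
  | cons i B ih =>
    rw [blockWeight_cons, unitCount_cons, add_comm]
    refine ih.add ?_
    split_ifs with h
    · rw [h]
    · exact Nat.modEq_zero_iff_dvd.2 ((hw i).resolve_left h)

theorem residueSum_eq (hw : ∀ i, w i = 1 ∨ a ∣ w i) (A : Multiset (Multiset (Fin n))) :
    residueSum a w A = (A.map fun B => unitCount w B % a).sum :=
  congrArg Multiset.sum (Multiset.map_congr rfl fun B _ => blockWeight_modEq_unitCount hw B)

theorem unitCount_sum (A : Multiset (Multiset (Fin n))) :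
    unitCount w A.sum = (A.map (unitCount w)).sum :=
  map_multiset_sum (Multiset.countPAddMonoidHom fun i => w i = 1) A

theorem residueSum_le_unitCount_sum (hw : ∀ i, w i = 1 ∨ a ∣ w i)
    (A : Multiset (Multiset (Fin n))) : residueSum a w A ≤ unitCount w A.sum := by
  rw [residueSum_eq hw, unitCount_sum]
  exact Multiset.sum_map_le_sum_map _ _ fun B _ => Nat.mod_le _ _

theorem residueSum_eq_unitCount_sum (hw : ∀ i, w i = 1 ∨ a ∣ w i)
    {A : Multiset (Multiset (Fin n))} (hA : ∀ B ∈ A, unitCount w B < a) :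
    residueSum a w A = unitCount w A.sum := by
  rw [residueSum_eq hw, unitCount_sum]
  exact congrArg Multiset.sum (Multiset.map_congr rfl fun B hB => Nat.mod_eq_of_lt (hA B hB))

theorem exists_unitCount_ge_of_reaches (ha : 0 < a) (hw : ∀ i, w i = 1 ∨ a ∣ w i)
    {A : Finset (Fin n)} (hA : unitCount w A.val = a) {ρ : Multiset (Multiset (Fin n))}
    (hρ : IsPartitionM ρ) (h : Reaches (weightCut w) (onlyBlock A) ρ) :
    ∃ B ∈ ρ, a ≤ unitCount w B := by
  by_contra! hlt
  have hblock : blockWeight w A.val % a = 0 := by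
    rw [blockWeight_modEq_unitCount hw A.val, hA, Nat.mod_self]
  have hstart : residueSum a w (onlyBlock A) ≤ unitCount w (Finset.univ \ A).val := by
    rw [onlyBlock, residueSum_cons, hblock, zero_add]
    simpa using residueSum_le_unitCount_sum hw ((Finset.univ \ A).val.map fun i => {i})
  have hend : residueSum a w ρ = a + unitCount w (Finset.univ \ A).val := by
    rw [residueSum_eq_unitCount_sum hw hlt, (isPartitionM_iff.1 hρ).2, ← val_add_val_univ_sdiff A,
      unitCount_add, hA]
  have hmono := h.residueSum_le (a := a)
  omega

theorem reaches_of_exists_unitCount_ge {A : Finset (Fin n)} (hA : ∀ i ∈ A, w i = 1)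
    {ρ : Multiset (Multiset (Fin n))} (hρ : IsPartitionM ρ) (h : ∃ B ∈ ρ, #A ≤ unitCount w B) :
    Reaches (weightCut w) (onlyBlock A) ρ := by
  obtain ⟨B, hB, hle⟩ := h
  have hnodup : B.Nodup := Multiset.nodup_of_le (Multiset.le_sum_of_mem hB) hρ.2.1
  obtain ⟨B, rfl⟩ : ∃ B' : Finset (Fin n), B'.val = B := ⟨⟨B, hnodup⟩, rfl⟩
  rw [unitCount_val] at hle
  obtain ⟨C, hC, hcard⟩ := Finset.exists_subset_card_eq hle
  have hmap : A.val.map w = C.val.map w := by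
    rw [Multiset.map_congr rfl hA,
      Multiset.map_congr rfl fun i hi => (Finset.mem_filter.1 (hC hi)).2]
    simp [hcard]
  exact (Reaches.onlyBlock_of_map_eq hmap).trans
    (Reaches.of_le_block hρ hB (Finset.val_le_iff.2 (hC.trans (Finset.filter_subset _ _))))

theorem mem_downClos_weightCut_iff (ha : 0 < a) (hw : ∀ i, w i = 1 ∨ a ∣ w i)
    {A : Finset (Fin n)} (hA : ∀ i ∈ A, w i = 1) (hcard : #A = a)
    {ρ : Multiset (Multiset (Fin n))} :
    ρ ∈ downClos (weightCut w) (onlyBlock A) ↔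
      IsPartitionM ρ ∧ ∃ B ∈ ρ, a ≤ unitCount w B := by
  have hunit : unitCount w A.val = a := by rw [unitCount_val, Finset.filter_true_of_mem hA, hcard]
  exact and_congr_right fun hρ => ⟨exists_unitCount_ge_of_reaches ha hw hunit hρ,
    fun h => reaches_of_exists_unitCount_ge hA hρ (hcard ▸ h)⟩

end Residues

section RelativeCut

open scoped Finset

variable {n a : ℕ} {w : Fin n → ℕ} {x : Fin n → ℝ}

theorem IsCube.sum_partOf (hx : IsCube x) :
    (partOf x).sum = (Finset.univ : Finset (Fin n)).val := by
  rw [partOf, Multiset.sum_cons, Multiset.sum_cons, Multiset.sum_map_singleton, plusM, minusM]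
  ext i
  simp only [Multiset.count_add, Finset.filter_val, Multiset.count_filter]
  rcases hx i with h | h | h <;> norm_num [h]

theorem IsCube.isPartitionM_partOf_iff (hx : IsCube x) :
    IsPartitionM (partOf x) ↔ plusM x ≠ 0 ∧ minusM x ≠ 0 := by
  rw [isPartitionM_iff, and_iff_left hx.sum_partOf]
  simp [partOf, eq_comm]

theorem exists_mem_partOf_unitCount_ge_iff (ha : 2 ≤ a) :
    (∃ B ∈ partOf x, a ≤ unitCount w B) ↔
      a ≤ unitCount w (plusM x) ∨ a ≤ unitCount w (minusM x) := by
  have hsingleton (i : Fin n) : ¬ a ≤ unitCount w {i} := by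
    have := Multiset.countP_le_card (fun i => w i = 1) {i}
    rw [Multiset.card_singleton] at this
    exact not_le.2 (this.trans_lt ha)
  simp [partOf, hsingleton]

theorem partOf_mem_downClos_weightCut_iff (ha : 2 ≤ a) (hw : ∀ i, w i = 1 ∨ a ∣ w i)
    {A : Finset (Fin n)} (hA : ∀ i ∈ A, w i = 1) (hcard : #A = a) (hx : x ∈ weightCut w) :
    partOf x ∈ downClos (weightCut w) (onlyBlock A) ↔
      a ≤ unitCount w (plusM x) ∨ a ≤ unitCount w (minusM x) := by
  rw [mem_downClos_weightCut_iff (by omega) hw hA hcard, hx.1.isPartitionM_partOf_iff,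
    exists_mem_partOf_unitCount_ge_iff ha, and_iff_right_iff_imp]
  intro hunits
  have hplus := unitCount_le_blockWeight (w := w) (plusM x)
  have hminus := unitCount_le_blockWeight (w := w) (minusM x)
  have hweight := blockWeight_plusM_eq_minusM hx
  have hpos : 0 < blockWeight w (plusM x) := by omega
  have hne_zero {B : Multiset (Fin n)} (hB : 0 < blockWeight w B) : B ≠ 0 := by
    rintro rfl
    exact hB.ne rfl
  exact ⟨hne_zero hpos, hne_zero (hweight ▸ hpos)⟩

theorem IsCube.sum_units_eq_zero_iff (hx : IsCube x) :
    ∑ i with w i = 1, x i = 0 ↔ unitCount w (plusM x) = unitCount w (minusM x) := by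
  rw [unitCount_eq_blockWeight, unitCount_eq_blockWeight, ← hx.sum_mul_eq_zero_iff]
  simp [Finset.sum_filter]

theorem unitCount_plusM : unitCount w (plusM x) = #{i | w i = 1 ∧ x i = 1} := by
  rw [plusM, unitCount_val, Finset.filter_filter]
  simp only [and_comm]

theorem mem_cutMinus_weightCut_iff (ha : 2 ≤ a) (hw : ∀ i, w i = 1 ∨ a ∣ w i)
    {A : Finset (Fin n)} (hA : ∀ i ∈ A, w i = 1) (hcard : #A = a) :
    x ∈ cutMinus (weightCut w) (downClos (weightCut w) (onlyBlock A)) ↔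
      x ∈ weightCut w ∧ ∑ i with w i = 1, x i = 0 ∧ #{i | w i = 1 ∧ x i = 1} < a := by
  refine and_congr_right fun hx => ?_
  rw [partOf_mem_downClos_weightCut_iff ha hw hA hcard hx, not_or, not_le, not_le,
    hx.1.sum_units_eq_zero_iff, ← unitCount_plusM]
  have hmod : unitCount w (plusM x) ≡ unitCount w (minusM x) [MOD a] := by
    have hweight := blockWeight_modEq_unitCount hw (plusM x)
    rw [blockWeight_plusM_eq_minusM hx] at hweight
    exact hweight.symm.trans (blockWeight_modEq_unitCount hw (minusM x))
  exact ⟨fun ⟨hp, hm⟩ => ⟨hmod.eq_of_lt_of_lt hp hm, hp⟩, fun ⟨heq, hp⟩ => ⟨hp, heq ▸ hp⟩⟩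

end RelativeCut

section Restriction

variable {n l : ℕ}

/-- The restriction of a block to `{1,…,l}`, as it appears in `restrictFirst`. -/
def lowPart (l : ℕ) (B : Multiset (Fin n)) : Multiset (Fin l) :=
  B.filterMap fun i : Fin n => if h : (i : ℕ) < l then some ⟨i, h⟩ else none

theorem card_lowPart (B : Multiset (Fin n)) :
    (lowPart l B).card = B.countP fun i : Fin n => (i : ℕ) < l := by
  induction B using Multiset.induction_on with
  | empty => rfl
  | cons i B ih =>
    rw [Multiset.countP_cons, ← ih, lowPart, Multiset.filterMap_cons]
    by_cases h : (i : ℕ) < l <;> simp [h, lowPart, add_comm]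

theorem lowPart_univ (hln : l ≤ n) :
    lowPart l (Finset.univ : Finset (Fin n)).val = (Finset.univ : Finset (Fin l)).val := by
  refine (Multiset.Nodup.ext (Finset.univ.nodup.filterMap _ fun i j b hi hj => ?_)
    Finset.univ.nodup).2 fun i => ?_
  · split_ifs at hi hj <;> simp_all [Fin.ext_iff]
  · simpa [lowPart, Multiset.mem_filterMap] using ⟨Fin.castLE hln i, by simp⟩

theorem restrictFirst_eq (ρ : Multiset (Multiset (Fin n))) :
    restrictFirst l ρ = (ρ.map (lowPart l)).filter fun B => B ≠ 0 := by
  rw [restrictFirst]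
  congr 1
  refine Multiset.map_congr rfl fun B _ => ?_
  -- In `restrictFirst` each block is coerced to a `Multiset ℕ`, which elaborates to a monadic bind.
  have hcoe : (do let i ← B; pure (i : ℕ)) = B.map (fun i : Fin n => (i : ℕ)) :=
    Multiset.bind_singleton B _
  rw [hcoe, Multiset.filterMap_map]
  rfl

theorem sum_restrictFirst (ρ : Multiset (Multiset (Fin n))) :
    (restrictFirst l ρ).sum = lowPart l ρ.sum := by
  rw [restrictFirst_eq]
  induction ρ using Multiset.induction_on with
  | empty => rfl
  | cons B ρ ih =>
    rw [Multiset.sum_cons, lowPart, Multiset.filterMap_add, ← lowPart, ← lowPart, ← ih,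
      Multiset.map_cons]
    by_cases h : lowPart l B = 0 <;> simp [h]

theorem IsPartitionM.restrictFirst (hln : l ≤ n) {ρ : Multiset (Multiset (Fin n))}
    (hρ : IsPartitionM ρ) : IsPartitionM (restrictFirst l ρ) := by
  rw [isPartitionM_iff, sum_restrictFirst, (isPartitionM_iff.1 hρ).2]
  exact ⟨fun h => (Multiset.mem_filter.1 h).2 rfl, lowPart_univ hln⟩

theorem exists_mem_restrictFirst_card_ge_iff {a : ℕ} (ha : 0 < a)
    {ρ : Multiset (Multiset (Fin n))} :
    (∃ B ∈ restrictFirst l ρ, a ≤ B.card) ↔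
      ∃ B ∈ ρ, a ≤ B.countP fun i : Fin n => (i : ℕ) < l := by
  simp only [restrictFirst_eq, Multiset.mem_filter, Multiset.mem_map, ← card_lowPart]
  constructor
  · rintro ⟨_, ⟨⟨B, hB, rfl⟩, -⟩, hle⟩
    exact ⟨B, hB, hle⟩
  · rintro ⟨B, hB, hle⟩
    exact ⟨lowPart l B, ⟨⟨B, hB, rfl⟩, Multiset.card_pos.1 (ha.trans_le hle)⟩, hle⟩

end Restriction

section FirstOnes

open scoped Finset

variable {n a l : ℕ}

/-- The weights of the partition `(1^l, a b_l, …, a b_{n-1})`, with coordinates numbered from `0`.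
Taking `b = 1` gives the partition `(a^k, 1^l)`. -/
def firstOnesWeight (a l : ℕ) (b : Fin n → ℕ) (i : Fin n) : ℕ :=
  if (i : ℕ) < l then 1 else a * b i

theorem SAK_eq_weightCut (a k l : ℕ) : SAK a k l = weightCut (firstOnesWeight a l 1) := by
  simp [SAK, weightCut, firstOnesWeight]

theorem TOnes_eq_weightCut (l : ℕ) : TOnes l = weightCut 1 := by
  simp [TOnes, weightCut]

theorem firstOnesWeight_eq_one_or_dvd (b : Fin n → ℕ) (i : Fin n) :
    firstOnesWeight a l b i = 1 ∨ a ∣ firstOnesWeight a l b i := by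
  unfold firstOnesWeight
  split_ifs
  · exact Or.inl rfl
  · exact Or.inr (dvd_mul_right a _)

theorem firstOnesWeight_eq_one_iff (ha : 2 ≤ a) {b : Fin n → ℕ} {i : Fin n} :
    firstOnesWeight a l b i = 1 ↔ (i : ℕ) < l := by
  simp [firstOnesWeight, show a ≠ 1 by omega]

theorem sum_firstOnesWeight_mul (a l : ℕ) (b : Fin n → ℕ) (x : Fin n → ℝ) :
    ∑ i, (firstOnesWeight a l b i : ℝ) * x i =
      ∑ i : Fin n, (if (i : ℕ) < l then x i else 0) +
        a * ∑ i : Fin n, (if l ≤ (i : ℕ) then b i * x i else 0) := by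
  rw [Finset.mul_sum, ← Finset.sum_add_distrib]
  refine Finset.sum_congr rfl fun i _ => ?_
  by_cases h : (i : ℕ) < l
  · simp [firstOnesWeight, h]
  · simp [firstOnesWeight, h, not_lt.1 h, mul_assoc]

theorem card_filter_val_lt_of_le (han : a ≤ n) : #{i : Fin n | (i : ℕ) < a} = a := by
  rw [Fin.card_filter_val_lt, min_eq_right han]

theorem mem_downClos_firstOnes_iff (ha : 2 ≤ a) (hal : a ≤ l) (hln : l ≤ n) (b : Fin n → ℕ)
    {ρ : Multiset (Multiset (Fin n))} :
    ρ ∈ downClos (weightCut (firstOnesWeight a l b)) (firstBlock a n) ↔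
      IsPartitionM ρ ∧ ∃ B ∈ ρ, a ≤ B.countP fun i : Fin n => (i : ℕ) < l := by
  rw [firstBlock, mem_downClos_weightCut_iff (by omega) (firstOnesWeight_eq_one_or_dvd b)
    (fun i hi => (firstOnesWeight_eq_one_iff ha).2 ((Finset.mem_filter.1 hi).2.trans_le hal))
    (card_filter_val_lt_of_le (hal.trans hln))]
  simp only [unitCount, firstOnesWeight_eq_one_iff ha]

theorem mem_downClos_TOnes_iff (ha : 0 < a) (hal : a ≤ l) {ρ : Multiset (Multiset (Fin l))} :
    ρ ∈ downClos (TOnes l) (firstBlock a l) ↔ IsPartitionM ρ ∧ ∃ B ∈ ρ, a ≤ B.card := by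
  rw [firstBlock, TOnes_eq_weightCut, mem_downClos_weightCut_iff (w := 1) ha (fun _ => Or.inl rfl)
    (fun _ _ => rfl) (card_filter_val_lt_of_le hal)]
  simp [unitCount]

theorem downClos_firstOnes (ha : 2 ≤ a) (hal : a ≤ l) (hln : l ≤ n) (b : Fin n → ℕ) :
    downClos (weightCut (firstOnesWeight a l b)) (firstBlock a n) =
      {ρ | IsPartitionM ρ ∧ restrictFirst l ρ ∈ downClos (TOnes l) (firstBlock a l)} := by
  ext ρ
  rw [Set.mem_ofPred_eq, mem_downClos_firstOnes_iff ha hal hln,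
    mem_downClos_TOnes_iff (by omega) hal, exists_mem_restrictFirst_card_ge_iff (by omega)]
  exact and_congr_right fun hρ => (and_iff_right (hρ.restrictFirst hln)).symm

theorem cutMinus_firstOnes (ha : 2 ≤ a) (hal : a ≤ l) (hln : l ≤ n) (b : Fin n → ℕ) :
    cutMinus (weightCut (firstOnesWeight a l b))
        (downClos (weightCut (firstOnesWeight a l b)) (firstBlock a n)) =
      {x | IsCube x ∧ (∑ i : Fin n, if (i : ℕ) < l then x i else 0) = 0 ∧
        (∑ i : Fin n, if l ≤ (i : ℕ) then b i * x i else 0) = 0 ∧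
        #{i : Fin n | (i : ℕ) < l ∧ x i = 1} < a} := by
  ext x
  rw [firstBlock, mem_cutMinus_weightCut_iff ha (firstOnesWeight_eq_one_or_dvd b)
    (fun i hi => (firstOnesWeight_eq_one_iff ha).2 ((Finset.mem_filter.1 hi).2.trans_le hal))
    (card_filter_val_lt_of_le (hal.trans hln))]
  simp only [firstOnesWeight_eq_one_iff ha, weightCut, Set.mem_ofPred_eq, sum_firstOnesWeight_mul,
    Finset.sum_filter]
  have ha0 : (a : ℝ) ≠ 0 := by positivity
  constructor
  · rintro ⟨⟨hx, hsum⟩, hlow, hcard⟩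
    exact ⟨hx, hlow, by simpa [hlow, ha0] using hsum, hcard⟩
  · rintro ⟨hx, hlow, hhigh, hcard⟩
    exact ⟨⟨hx, by simp [hlow, hhigh]⟩, hlow, hcard⟩

theorem cutMinus_TOnes (ha : 2 ≤ a) (hal : a ≤ l) :
    cutMinus (TOnes l) (downClos (TOnes l) (firstBlock a l)) =
      {z | z ∈ TOnes l ∧ #{i | z i = 1} < a} := by
  ext z
  rw [firstBlock, TOnes_eq_weightCut, mem_cutMinus_weightCut_iff (w := 1) ha (fun _ => Or.inl rfl)
    (fun _ _ => rfl) (card_filter_val_lt_of_le hal), Set.mem_ofPred_eq, ← TOnes_eq_weightCut]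
  exact and_congr_right fun hz => by simp [hz.2]

theorem sum_ite_val_lt {M : Type*} [AddCommMonoid M] (hln : l ≤ n) (f : Fin n → M) :
    ∑ i : Fin n, (if (i : ℕ) < l then f i else 0) = ∑ i : Fin l, f (Fin.castLE hln i) := by
  obtain ⟨k, rfl⟩ := Nat.exists_eq_add_of_le hln
  simp [Fin.sum_univ_add, Fin.castAdd]

theorem card_filter_val_lt_and (hln : l ≤ n) (p : Fin n → Prop) [DecidablePred p] :
    #{i : Fin n | (i : ℕ) < l ∧ p i} = #{i : Fin l | p (Fin.castLE hln i)} := by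
  simp only [Finset.card_filter, ite_and, sum_ite_val_lt hln]

theorem cutMinus_firstOnes_eq_restrict (ha : 2 ≤ a) (hal : a ≤ l) (hln : l ≤ n)
    (b : Fin n → ℕ) :
    cutMinus (weightCut (firstOnesWeight a l b))
        (downClos (weightCut (firstOnesWeight a l b)) (firstBlock a n)) =
      {x | IsCube x ∧
        (fun i : Fin l => x (Fin.castLE hln i)) ∈
          cutMinus (TOnes l) (downClos (TOnes l) (firstBlock a l)) ∧
        (∑ i : Fin n, if l ≤ (i : ℕ) then b i * x i else 0) = 0} := by
  rw [cutMinus_firstOnes ha hal hln, cutMinus_TOnes ha hal]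
  ext x
  simp only [Set.mem_ofPred_eq, TOnes, sum_ite_val_lt hln, card_filter_val_lt_and hln]
  exact ⟨fun ⟨hx, hlow, hhigh, hcard⟩ => ⟨hx, ⟨⟨fun i => hx _, hlow⟩, hcard⟩, hhigh⟩,
    fun ⟨hx, ⟨⟨_, hlow⟩, hcard⟩, hhigh⟩ => ⟨hx, hlow, hhigh, hcard⟩⟩

theorem relative_cut_ak_ones_general (ha : 2 ≤ a) (hal : a ≤ l) (hln : l ≤ n) (b : Fin n → ℕ) :
    downClos (weightCut (firstOnesWeight a l b)) (firstBlock a n) =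
      {ρ | IsPartitionM ρ ∧ restrictFirst l ρ ∈ downClos (TOnes l) (firstBlock a l)} ∧
    cutMinus (weightCut (firstOnesWeight a l b))
        (downClos (weightCut (firstOnesWeight a l b)) (firstBlock a n)) =
      {x | IsCube x ∧ (∑ i : Fin n, if (i : ℕ) < l then x i else 0) = 0 ∧
        (∑ i : Fin n, if l ≤ (i : ℕ) then b i * x i else 0) = 0 ∧
        #{i : Fin n | (i : ℕ) < l ∧ x i = 1} < a} ∧
    cutMinus (TOnes l) (downClos (TOnes l) (firstBlock a l)) =
      {z | z ∈ TOnes l ∧ #{i | z i = 1} < a} ∧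
    cutMinus (weightCut (firstOnesWeight a l b))
        (downClos (weightCut (firstOnesWeight a l b)) (firstBlock a n)) =
      {x | IsCube x ∧
        (fun i : Fin l => x (Fin.castLE hln i)) ∈
          cutMinus (TOnes l) (downClos (TOnes l) (firstBlock a l)) ∧
        (∑ i : Fin n, if l ≤ (i : ℕ) then b i * x i else 0) = 0} :=
  ⟨downClos_firstOnes ha hal hln b, cutMinus_firstOnes ha hal hln b, cutMinus_TOnes ha hal,
    cutMinus_firstOnes_eq_restrict ha hal hln b⟩

end FirstOnes

/-- the structure of the relative cut `Q(S, π↓S)` for the resonance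
`(a^k, 1^l)`, where `π` has unique non-singleton block `{1,…,a}`. -/
theorem relative_cut_ak_ones (a k l : ℕ) (ha : 2 ≤ a) (hk : 1 ≤ k) (hal : a ≤ l) :
    -- (i)
    downClos (SAK a k l) (firstBlock a (l + k)) =
      {ρ | IsPartitionM ρ ∧ restrictFirst l ρ ∈ downClos (TOnes l) (firstBlock a l)} ∧
    -- (ii)
    cutMinus (SAK a k l) (downClos (SAK a k l) (firstBlock a (l + k))) =
      {x | IsCube x ∧ (∑ i : Fin (l + k), if (i : ℕ) < l then x i else 0) = 0 ∧
        (∑ i : Fin (l + k), if l ≤ (i : ℕ) then x i else 0) = 0 ∧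
        (Finset.univ.filter (fun i : Fin (l + k) => (i : ℕ) < l ∧ x i = 1)).card < a} ∧
    -- (iii)
    cutMinus (TOnes l) (downClos (TOnes l) (firstBlock a l)) =
      {z | z ∈ TOnes l ∧ (Finset.univ.filter (fun i : Fin l => z i = 1)).card < a} ∧
    cutMinus (SAK a k l) (downClos (SAK a k l) (firstBlock a (l + k))) =
      {x | IsCube x ∧
        (fun i : Fin l => x (Fin.castLE (Nat.le_add_right l k) i)) ∈
          cutMinus (TOnes l) (downClos (TOnes l) (firstBlock a l)) ∧
        (∑ i : Fin (l + k), if l ≤ (i : ℕ) then x i else 0) = 0} := by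
  simpa [SAK_eq_weightCut] using relative_cut_ak_ones_general ha hal (Nat.le_add_right l k) 1
end

section
/- Let λ = (λ_1 ≤ … ≤ λ_n) be a sequential nondecreasing sequence of positive integers for which I(λ) exists, let t = n − |I(λ)|, and let {j_1 < … < j_t} = [n] ∖ I(λ). Then the nondecreasing sequence λ̄ = (λ_{j_1},…,λ_{j_t}, λ_n) of length t+1, consisting of the parts of λ outside I(λ) together with one new part Σ_{i∈I(λ)} λ_i = λ_n, is sequential. -/
/-- A sequence `λ : [n] → ℕ` is sequential if whenever `Σ_{i∈I} λ_i = Σ_{j∈J} λ_j`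
and `q ∈ I` is the maximum of `I ∪ J`, some subset `J' ⊆ J` has `Σ_{j∈J'} λ_j = λ_q`. -/
def IsSequentialSeq {n : ℕ} (lam : Fin n → ℕ) : Prop :=
  ∀ I J : Finset (Fin n), ∑ i ∈ I, lam i = ∑ j ∈ J, lam j →
    ∀ q ∈ I, (∀ p ∈ I ∪ J, p ≤ q) → ∃ J' ⊆ J, lam q = ∑ j ∈ J', lam j

/-- `A` is lexicographically larger than `B`: either `B ⊆ A`, or, writing the elements
increasingly, the largest `q` elements agree and the next one of `A` is bigger. -/
def LexLarger {n : ℕ} (A B : Finset (Fin n)) : Prop :=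
  B ⊆ A ∨ ∃ q : ℕ, q < min A.card B.card ∧
    (∀ i : ℕ, i < q →
      (A.sort (· ≤ ·))[A.card - 1 - i]? = (B.sort (· ≤ ·))[B.card - 1 - i]?) ∧
    ∃ x y : Fin n, (A.sort (· ≤ ·))[A.card - 1 - q]? = some x ∧
      (B.sort (· ≤ ·))[B.card - 1 - q]? = some y ∧ y < x

/-- A subset `I` of `[n+1]` with at least two elements whose `λ`-sum is the last
(largest) part of `λ`. -/
def GoodSet {n : ℕ} (lam : Fin (n + 1) → ℕ) (I : Finset (Fin (n + 1))) : Prop :=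
  2 ≤ I.card ∧ ∑ i ∈ I, lam i = lam (Fin.last n)

/-- `I` is the set `I(λ)`: a good set which is lexicographically larger than every
other good set. -/
def IsIlam {n : ℕ} (lam : Fin (n + 1) → ℕ) (I : Finset (Fin (n + 1))) : Prop :=
  GoodSet lam I ∧ ∀ J, GoodSet lam J → LexLarger I J

/-- A sequential `λ` is strongly sequential if either no good set exists, or `I(λ)`
exists and, with `q = max I(λ)`, some `J ⊆ I(λ) ∖ {q}` has `Σ_{j∈J} λ_j = λ_q`. -/
def StronglySequential {n : ℕ} (lam : Fin (n + 1) → ℕ) : Prop :=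
  IsSequentialSeq lam ∧
  ((∀ I, ¬ GoodSet lam I) ∨
    ∃ I, IsIlam lam I ∧ ∃ q ∈ I, (∀ p ∈ I, p ≤ q) ∧
      ∃ J ⊆ I.erase q, lam q = ∑ j ∈ J, lam j)

/-! Deleting parts preserves sequentiality, so only relations whose maximal term is the new part
`λ_n = ∑ i ∈ I, λ i` are at stake. These read `λ_n + ∑ i ∈ A, λ i = ∑ j ∈ B, λ j` with `A` disjoint
from `I`. If `n ∉ A`, this is a relation of `λ` between `A ∪ {n}` and `B`; if `n ∈ A`, expanding
`λ_n` turns it into one between `A ∪ I` and `B`. In both cases the maximal index is `n` and lies on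
the left, so the sequentiality of `λ` writes `λ_n` as a sum over a subset of `B`. -/

open Finset

theorem exists_subset_map_eq_sum_iff {α β M : Type*} [AddCommMonoid M] (e : α ↪ β) (f : β → M)
    (B : Finset α) (x : M) :
    (∃ J ⊆ B.map e, x = ∑ j ∈ J, f j) ↔ ∃ J ⊆ B, x = ∑ j ∈ J, f (e j) := by
  constructor
  · rintro ⟨_, hJ, rfl⟩
    obtain ⟨J, hJB, rfl⟩ := subset_map_iff.mp hJ
    exact ⟨J, hJB, sum_map J e f⟩
  · rintro ⟨J, hJB, rfl⟩
    exact ⟨J.map e, map_subset_map.mpr hJB, (sum_map J e f).symm⟩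

theorem isSequentialSeq_iff_forall_subset_Iio {n : ℕ} {lam : Fin n → ℕ} :
    IsSequentialSeq lam ↔ ∀ q, ∀ A ⊆ Iio q, ∀ B ⊆ Iio q,
      lam q + ∑ i ∈ A, lam i = ∑ j ∈ B, lam j → ∃ J ⊆ B, lam q = ∑ j ∈ J, lam j := by
  constructor
  · intro h q A hA B hB hsum
    have hqA : q ∉ A := fun hq => by simpa using hA hq
    refine h (insert q A) B (by rwa [sum_insert hqA]) q (mem_insert_self q A) ?_
    have hle : insert q A ∪ B ⊆ Iic q :=
      union_subset (insert_subset (mem_Iic.mpr le_rfl) (hA.trans Iio_subset_Iic_self))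
        (hB.trans Iio_subset_Iic_self)
    exact fun p hp => mem_Iic.mp (hle hp)
  · intro h A B hsum q hqA hmax
    by_cases hqB : q ∈ B
    · exact ⟨{q}, by simpa using hqB, by simp⟩
    · refine h q (A.erase q) (fun p hp => ?_) B (fun p hp => ?_) (by rwa [add_sum_erase A lam hqA])
      · exact mem_Iio.mpr <|
          (hmax p (mem_union_left B (mem_of_mem_erase hp))).lt_of_ne (ne_of_mem_erase hp)
      · exact mem_Iio.mpr <|
          (hmax p (mem_union_right A hp)).lt_of_ne (ne_of_mem_of_not_mem hp hqB)

theorem isSequentialSeq_snoc_iff {t : ℕ} {f : Fin t → ℕ} {x : ℕ} :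
    IsSequentialSeq (Fin.snoc f x : Fin (t + 1) → ℕ) ↔
      IsSequentialSeq f ∧ ∀ A B : Finset (Fin t),
        x + ∑ i ∈ A, f i = ∑ j ∈ B, f j → ∃ J ⊆ B, x = ∑ j ∈ J, f j := by
  have forall_subset_map (S : Finset (Fin t)) (P : Finset (Fin (t + 1)) → Prop) :
      (∀ A ⊆ S.map Fin.castSuccEmb, P A) ↔ ∀ A ⊆ S, P (A.map Fin.castSuccEmb) := by
    simp only [subset_map_iff, forall_exists_index, and_imp]
    exact ⟨fun h A hA => h _ A hA rfl, fun h _ A hA hAS => hAS ▸ h A hA⟩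
  simp only [isSequentialSeq_iff_forall_subset_Iio, Fin.forall_fin_succ', Fin.Iio_last_eq_map,
    ← Fin.map_castSuccEmb_Iio, forall_subset_map, exists_subset_map_eq_sum_iff, sum_map,
    Fin.coe_castSuccEmb, Fin.snoc_castSucc, Fin.snoc_last, subset_univ, forall_const]

namespace IsSequentialSeq

theorem comp_orderEmbedding {n t : ℕ} {lam : Fin n → ℕ} (hseq : IsSequentialSeq lam)
    (e : Fin t ↪o Fin n) : IsSequentialSeq (lam ∘ e) := by
  rw [isSequentialSeq_iff_forall_subset_Iio] at hseq ⊢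
  intro q A hA B hB hsum
  have map_subset_Iio {S : Finset (Fin t)} (hS : S ⊆ Iio q) :
      S.map e.toEmbedding ⊆ Iio (e q) := fun p hp => by
    obtain ⟨i, hi, rfl⟩ := mem_map.mp hp
    exact mem_Iio.mpr (e.lt_iff_lt.mpr (mem_Iio.mp (hS hi)))
  exact (exists_subset_map_eq_sum_iff e.toEmbedding lam B _).mp <|
    hseq (e q) _ (map_subset_Iio hA) _ (map_subset_Iio hB) (by simpa using hsum)

theorem exists_subset_eq_sum_of_disjoint {n : ℕ} {lam : Fin n → ℕ} (hseq : IsSequentialSeq lam)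
    {q : Fin n} {A B I : Finset (Fin n)} (hA : A ⊆ Iic q) (hB : B ⊆ Iic q) (hI : I ⊆ Iic q)
    (hAI : Disjoint A I) (hIsum : ∑ i ∈ I, lam i = lam q)
    (hsum : lam q + ∑ i ∈ A, lam i = ∑ j ∈ B, lam j) :
    ∃ J ⊆ B, lam q = ∑ j ∈ J, lam j := by
  by_cases hqA : q ∈ A
  · refine hseq (A ∪ I) B ?_ q (mem_union_left I hqA) fun p hp =>
      mem_Iic.mp (union_subset (union_subset hA hI) hB hp)
    rw [sum_union hAI, hIsum, add_comm, hsum]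
  · refine hseq (insert q A) B ?_ q (mem_insert_self q A) fun p hp =>
      mem_Iic.mp (union_subset (insert_subset (mem_Iic.mpr le_rfl) hA) hB hp)
    rw [sum_insert hqA, hsum]

end IsSequentialSeq

theorem sequential_contraction_general {n t : ℕ} {lam : Fin (n + 1) → ℕ}
    (hseq : IsSequentialSeq lam) {I : Finset (Fin (n + 1))}
    (hI : ∑ i ∈ I, lam i = lam (Fin.last n)) (e : Fin t ↪o Fin (n + 1)) (he : ∀ i, e i ∉ I) :
    IsSequentialSeq (Fin.snoc (lam ∘ e) (lam (Fin.last n)) : Fin (t + 1) → ℕ) := by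
  refine isSequentialSeq_snoc_iff.mpr ⟨hseq.comp_orderEmbedding e, fun A B hsum => ?_⟩
  have hle (S : Finset (Fin (n + 1))) : S ⊆ Iic (Fin.last n) :=
    fun p _ => mem_Iic.mpr (Fin.le_last p)
  have hdisj : Disjoint (A.map e.toEmbedding) I := disjoint_left.mpr fun p hp => by
    obtain ⟨i, -, rfl⟩ := mem_map.mp hp
    exact he i
  exact (exists_subset_map_eq_sum_iff e.toEmbedding lam B _).mp <|
    hseq.exists_subset_eq_sum_of_disjoint (hle _) (hle _) (hle I) hdisj hI (by simpa using hsum)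

theorem ite_getD_sort_eq_snoc_orderEmbOfFin {α β : Type*} [LinearOrder α] (S : Finset α) {t : ℕ}
    (hS : S.card = t) (f : α → β) (d : α) (x : β) :
    (fun i : Fin (t + 1) => if (i : ℕ) < t then f ((S.sort (· ≤ ·)).getD i d) else x) =
      Fin.snoc (f ∘ S.orderEmbOfFin hS) x := by
  funext i
  induction i using Fin.lastCases with
  | last => simp
  | cast i =>
    have hi : (i : ℕ) < (S.sort (· ≤ ·)).length := by simp [hS]
    simp only [Fin.val_castSucc, i.isLt, if_true, Fin.snoc_castSucc, Function.comp_apply,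
      List.getD_eq_getElem _ d hi, orderEmbOfFin_apply, Fin.getElem_fin]

/-- removing the parts indexed by `I(λ)` and adding one new part
`Σ_{i∈I(λ)} λ_i = λ_{max}` yields again a sequential nondecreasing sequence. -/
theorem sequential_contraction {n : ℕ} (lam : Fin (n + 1) → ℕ)
    (hpos : ∀ i, 0 < lam i) (hmono : Monotone lam) (hseq : IsSequentialSeq lam)
    (I : Finset (Fin (n + 1))) (hI : IsIlam lam I)
    (t : ℕ) (ht : t = (Finset.univ \ I).card) :
    IsSequentialSeq (fun i : Fin (t + 1) =>
      if (i : ℕ) < t then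
        lam (((Finset.univ \ I).sort (· ≤ ·)).getD (i : ℕ) (Fin.last n))
      else lam (Fin.last n)) := by
  rw [ite_getD_sort_eq_snoc_orderEmbOfFin _ ht.symm]
  exact sequential_contraction_general hseq hI.1.2 _ fun i =>
    (mem_sdiff.mp (orderEmbOfFin_mem _ ht.symm i)).2
end

section
/- Let t ≥ 1, let b_1, …, b_t be positive integers with b_i dividing b_{i+1} for every i = 1,…,t−1, and let m_1,…,m_t ≥ 1 be integers. Then the nondecreasing sequence λ consisting of m_i copies of b_i for each i = 1,…,t is sequential. -/
/-!
Let `d = λ_q` be the largest part involved. Since the parts form a chain under divisibility, when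
the `λ_j` with `j ∈ J` are added in decreasing order, each partial sum below `d`, as well as `d`
itself, is a multiple of the next nonzero part, so adding that part cannot overshoot `d`. The
total is at least `d`, hence some partial sum equals `d`.
-/

theorem dvd_of_isChain_dvd_of_le {s : Set ℕ} (hs : IsChain (· ∣ ·) s) {a b : ℕ} (ha : a ∈ s)
    (hb : b ∈ s) (hpos : 0 < a) (hle : a ≤ b) : a ∣ b := by
  rcases hs.total ha hb with hab | hba
  · exact hab
  · exact (hle.antisymm (Nat.le_of_dvd hpos hba)).dvd

theorem exists_subset_sum_eq_of_isChain_dvd {ι : Type*} {f : ι → ℕ} {d : ℕ} (J : Finset ι)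
    (hchain : IsChain (· ∣ ·) (insert d (f '' J))) (hle : ∀ j ∈ J, f j ≤ d)
    (hsum : d ≤ ∑ j ∈ J, f j) : ∃ J' ⊆ J, ∑ j ∈ J', f j = d := by
  classical
  induction J using Finset.induction_on_min_value f with
  | empty => exact ⟨∅, subset_rfl, (Nat.eq_zero_of_le_zero hsum).symm⟩
  | insert a s has hmin ih =>
    have hsub : s ⊆ insert a s := Finset.subset_insert a s
    by_cases hs : d ≤ ∑ j ∈ s, f j
    · have hchain_s : IsChain (· ∣ ·) (insert d (f '' s)) :=
        hchain.mono (Set.insert_subset_insert (Set.image_mono (Finset.coe_subset.2 hsub)))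
      obtain ⟨J', hJ', hJ'sum⟩ := ih hchain_s (fun j hj => hle j (hsub hj)) hs
      exact ⟨J', hJ'.trans hsub, hJ'sum⟩
    · rw [Finset.sum_insert has] at hsum
      have hpos : 0 < f a := by omega
      have hmem {j : ι} (hj : j ∈ insert a s) : f j ∈ insert d (f '' (insert a s : Finset ι)) :=
        Set.mem_insert_of_mem d (Set.mem_image_of_mem f hj)
      have ha : a ∈ insert a s := Finset.mem_insert_self a s
      have ha_dvd_d : f a ∣ d :=
        dvd_of_isChain_dvd_of_le hchain (hmem ha) (Set.mem_insert d _) hpos (hle a ha)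
      have ha_dvd_sum : f a ∣ ∑ j ∈ s, f j := Finset.dvd_sum fun j hj =>
        dvd_of_isChain_dvd_of_le hchain (hmem ha) (hmem (hsub hj)) hpos (hmin j hj)
      have hno_overshoot : f a + ∑ j ∈ s, f j ≤ d :=
        Nat.le_of_lt_add_of_dvd (by omega) (dvd_add dvd_rfl ha_dvd_sum) ha_dvd_d
      refine ⟨insert a s, subset_rfl, ?_⟩
      rw [Finset.sum_insert has]
      exact hno_overshoot.antisymm hsum

theorem isSequentialSeq_of_monotone_of_isChain_dvd {n : ℕ} {lam : Fin n → ℕ}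
    (hmono : Monotone lam) (hchain : IsChain (· ∣ ·) (Set.range lam)) : IsSequentialSeq lam := by
  intro I J hIJ q hq hmax
  have hchain_J : IsChain (· ∣ ·) (insert (lam q) (lam '' J)) :=
    hchain.mono (Set.insert_subset (Set.mem_range_self q) (Set.image_subset_range lam J))
  have hle : ∀ j ∈ J, lam j ≤ lam q := fun j hj => hmono (hmax j (Finset.mem_union_right I hj))
  have hsum : lam q ≤ ∑ j ∈ J, lam j :=
    hIJ ▸ Finset.single_le_sum (fun _ _ => Nat.zero_le _) hq
  obtain ⟨J', hJ', hJ'sum⟩ := exists_subset_sum_eq_of_isChain_dvd J hchain_J hle hsum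
  exact ⟨J', hJ', hJ'sum.symm⟩

theorem isChain_range_of_rel_succ {α : Type*} {r : α → α → Prop} [IsTrans α r] {n : ℕ}
    {f : Fin (n + 1) → α} (hf : ∀ i : Fin n, r (f i.castSucc) (f i.succ)) :
    IsChain r (Set.range f) := by
  have hlt : ∀ ⦃i j⦄, i < j → r (f i) (f j) := (Fin.liftFun_iff_succ r).2 hf
  rintro _ ⟨i, rfl⟩ _ ⟨j, rfl⟩ hne
  exact (ne_of_apply_ne f hne).lt_or_gt.imp (@hlt i j) (@hlt j i)

/-- a nondecreasing sequence consisting of `m_i` copies of `b_i`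
(`i = 1,…,t`), where each `b_i` divides `b_{i+1}`, is sequential. -/
theorem division_chain_sequential (t : ℕ) (ht : 1 ≤ t) (b m : Fin t → ℕ)
    (hb : ∀ i, 0 < b i) (hm : ∀ i, 1 ≤ m i)
    (hdvd : ∀ i : Fin t, ∀ h : (i : ℕ) + 1 < t, b i ∣ b ⟨(i : ℕ) + 1, h⟩)
    (N : ℕ) (lam : Fin N → ℕ) (hmono : Monotone lam)
    (hms : Multiset.map lam Finset.univ.val =
      (Finset.univ.val : Multiset (Fin t)).bind
        (fun i => Multiset.replicate (m i) (b i))) :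
    IsSequentialSeq lam := by
  have hsubset : Set.range lam ⊆ Set.range b := by
    rintro _ ⟨i, rfl⟩
    have hi : lam i ∈ Multiset.map lam Finset.univ.val :=
      Multiset.mem_map_of_mem lam (Finset.mem_univ i)
    rw [hms, Multiset.mem_bind] at hi
    obtain ⟨k, -, hk⟩ := hi
    exact ⟨k, (Multiset.eq_of_mem_replicate hk).symm⟩
  have hchain : IsChain (· ∣ ·) (Set.range b) := by
    obtain ⟨n, rfl⟩ := Nat.exists_eq_add_of_le' ht
    exact isChain_range_of_rel_succ fun i => hdvd i.castSucc (Nat.succ_lt_succ i.isLt)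
  exact isSequentialSeq_of_monotone_of_isChain_dvd hmono (hchain.mono hsubset)
end

section
/- Let t ≥ 1, let b_1, …, b_t be positive integers with b_i dividing b_{i+1} for every i = 1,…,t−1, and let m_1,…,m_t ≥ 1 be integers. Then the nondecreasing sequence λ consisting of m_i copies of b_i for each i = 1,…,t is strongly sequential. -/
/-! Suppose the values `f i` form a divisibility chain and all divide `d`. Add them up in decreasing
order: as long as the sum is less than `d`, its distance to `d` is divisible by the next value, so
adding that value does not overshoot `d`. Hence if the total is at least `d`, some partial sum is
exactly `d`; this gives the sequential property.

The lexicographic comparison contains the colexicographic order, which is linear, so `I(λ)` exists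
as soon as there is a good set. If `q` is its maximum, then `λ_q` divides both itself and the total
`λ_n`, hence also the positive sum over the remaining indices. That sum is therefore at least
`λ_q`, and the first argument applies to it. -/

theorem dvd_of_le_of_dvd_succ {α : Type*} [Monoid α] {t : ℕ} {b : Fin t → α}
    (h : ∀ i : Fin t, ∀ hi : (i : ℕ) + 1 < t, b i ∣ b ⟨(i : ℕ) + 1, hi⟩) {i j : Fin t}
    (hij : i ≤ j) : b i ∣ b j := by
  cases t with
  | zero => exact i.elim0
  | succ t =>
    rcases hij.eq_or_lt with rfl | hlt
    · exact dvd_rfl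
    · exact (Fin.liftFun_iff_succ (· ∣ ·)).2
        (fun k => h k.castSucc (Nat.succ_lt_succ k.isLt)) hlt

theorem exists_eq_of_map_eq_bind_replicate {ι κ α : Type*} [Fintype ι] [Fintype κ] {f : ι → α}
    {b : κ → α} {m : κ → ℕ}
    (h : Multiset.map f Finset.univ.val =
      (Finset.univ.val : Multiset κ).bind fun k => Multiset.replicate (m k) (b k))
    (i : ι) : ∃ k, f i = b k := by
  have hmem : f i ∈ Multiset.map f Finset.univ.val :=
    Multiset.mem_map_of_mem f (Finset.mem_univ i)
  rw [h, Multiset.mem_bind] at hmem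
  obtain ⟨k, -, hk⟩ := hmem
  exact ⟨k, Multiset.eq_of_mem_replicate hk⟩

theorem dvd_of_dvd_or_dvd_of_le {a c : ℕ} (h : a ∣ c ∨ c ∣ a) (ha : 0 < a) (hac : a ≤ c) :
    a ∣ c :=
  h.elim id fun hca => (hac.antisymm (Nat.le_of_dvd ha hca)).dvd

section DivisibilityChain

variable {ι : Type*} [LinearOrder ι] {f : ι → ℕ}

theorem exists_subset_sum_eq_of_dvd_chain {d : ℕ} (S : Finset ι)
    (hf : ∀ i ∈ S, ∀ j ∈ S, i ≤ j → f i ∣ f j) (hd : ∀ i ∈ S, f i ∣ d)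
    (hS : d ≤ ∑ i ∈ S, f i) : ∃ J ⊆ S, d = ∑ j ∈ J, f j := by
  induction S using Finset.induction_on_min with
  | empty => exact ⟨∅, subset_rfl, by simpa using hS⟩
  | insert a s ha ih =>
    rw [Finset.forall_mem_insert] at hd
    rcases le_or_gt d (∑ i ∈ s, f i) with hs | hs
    · obtain ⟨J, hJ, hsum⟩ := ih
        (fun i hi j hj => hf i (Finset.mem_insert_of_mem hi) j (Finset.mem_insert_of_mem hj))
        hd.2 hs
      exact ⟨J, hJ.trans (Finset.subset_insert a s), hsum⟩
    · have has : a ∉ s := fun h => (ha a h).false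
      have hdvd : f a ∣ ∑ i ∈ s, f i := Finset.dvd_sum fun i hi =>
        hf a (Finset.mem_insert_self a s) i (Finset.mem_insert_of_mem hi) (ha i hi).le
      have hgap : f a ≤ d - ∑ i ∈ s, f i :=
        Nat.le_of_dvd (Nat.sub_pos_of_lt hs) (Nat.dvd_sub hd.1 hdvd)
      refine ⟨insert a s, subset_rfl, hS.antisymm ?_⟩
      rw [Finset.sum_insert has]
      exact Nat.add_le_of_le_sub hs.le hgap

theorem exists_subset_erase_sum_eq_of_dvd_chain {I : Finset ι} {q : ι}
    (hpos : ∀ i ∈ I, 0 < f i) (hf : ∀ i ∈ I, ∀ j ∈ I, i ≤ j → f i ∣ f j)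
    (hI : I.Nontrivial) (hq : q ∈ I) (hmax : ∀ p ∈ I, p ≤ q) (hdvd : f q ∣ ∑ i ∈ I, f i) :
    ∃ J ⊆ I.erase q, f q = ∑ j ∈ J, f j := by
  have hrest_dvd : f q ∣ ∑ i ∈ I.erase q, f i := by
    rwa [← Finset.add_sum_erase I f hq, Nat.dvd_add_right dvd_rfl] at hdvd
  have hrest_pos : 0 < ∑ i ∈ I.erase q, f i :=
    Finset.sum_pos (fun i hi => hpos i (Finset.mem_of_mem_erase hi)) hI.erase_nonempty
  exact exists_subset_sum_eq_of_dvd_chain (I.erase q)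
    (fun i hi j hj => hf i (Finset.mem_of_mem_erase hi) j (Finset.mem_of_mem_erase hj))
    (fun i hi => hf i (Finset.mem_of_mem_erase hi) q hq (hmax i (Finset.mem_of_mem_erase hi)))
    (Nat.le_of_dvd hrest_pos hrest_dvd)

theorem isSequentialSeq_of_dvd_chain {n : ℕ} {lam : Fin n → ℕ}
    (hdvd : ∀ i j, i ≤ j → lam i ∣ lam j) : IsSequentialSeq lam := by
  intro I J hIJ q hq hmax
  have hqJ : lam q ≤ ∑ j ∈ J, lam j :=
    hIJ ▸ Finset.single_le_sum (fun i _ => Nat.zero_le (lam i)) hq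
  exact exists_subset_sum_eq_of_dvd_chain J (fun i _ j _ => hdvd i j)
    (fun j hj => hdvd j q (hmax j (Finset.mem_union_right I hj))) hqJ

end DivisibilityChain

theorem exists_sort_eq_append_cons_sort_filter_lt {α : Type*} [LinearOrder α] {A : Finset α}
    {a : α} (ha : a ∈ A) :
    ∃ l : List α, A.sort (· ≤ ·) = l ++ a :: (A.filter (a < ·)).sort (· ≤ ·) := by
  obtain ⟨l, r, hlr⟩ := List.append_of_mem ((Finset.mem_sort (· ≤ ·)).2 ha)
  have hsorted : (l ++ a :: r).Pairwise (· < ·) := hlr ▸ A.sortedLT_sort.pairwise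
  obtain ⟨-, har, hla⟩ := List.pairwise_append.1 hsorted
  obtain ⟨ha_lt, hr⟩ := List.pairwise_cons.1 har
  have hfilter : r.toFinset = A.filter (a < ·) := by
    ext x
    rw [List.mem_toFinset, Finset.mem_filter, ← Finset.mem_sort (· ≤ ·), hlr, List.mem_append,
      List.mem_cons]
    refine ⟨fun hx => ⟨.inr (.inr hx), ha_lt x hx⟩, ?_⟩
    rintro ⟨hx | rfl | hx, hax⟩
    · exact absurd hax (hla x hx a List.mem_cons_self).not_gt
    · exact absurd hax (lt_irrefl x)
    · exact hx
  refine ⟨l, ?_⟩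
  rw [← hfilter, (List.toFinset_sort (· ≤ ·) (hr.imp ne_of_lt)).2 (hr.imp le_of_lt), hlr]

namespace LexLarger

variable {n : ℕ} {A B : Finset (Fin n)} {x y : Fin n}

theorem of_sort_eq_append_cons {l₁ l₂ r : List (Fin n)} (hA : A.sort (· ≤ ·) = l₁ ++ x :: r)
    (hB : B.sort (· ≤ ·) = l₂ ++ y :: r) (hyx : y < x) : LexLarger A B := by
  have hAcard : A.card = l₁.length + r.length + 1 := by
    rw [← Finset.length_sort (· ≤ ·), hA, List.length_append, List.length_cons, add_assoc]
  have hBcard : B.card = l₂.length + r.length + 1 := by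
    rw [← Finset.length_sort (· ≤ ·), hB, List.length_append, List.length_cons, add_assoc]
  have getElem?_tail (l : List (Fin n)) (z : Fin n) {i : ℕ} (hi : i < r.length) :
      (l ++ z :: r)[l.length + r.length + 1 - 1 - i]? = r[r.length - 1 - i]? := by
    rw [List.getElem?_append_right (by omega),
      show l.length + r.length + 1 - 1 - i - l.length = r.length - 1 - i + 1 by omega,
      List.getElem?_cons_succ]
  have getElem?_pivot (l : List (Fin n)) (z : Fin n) :
      (l ++ z :: r)[l.length + r.length + 1 - 1 - r.length]? = some z := by
    simp
  refine .inr ⟨r.length, by omega, fun i hi => ?_, x, y, ?_, ?_, hyx⟩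
  · rw [hA, hB, hAcard, hBcard, getElem?_tail l₁ x hi, getElem?_tail l₂ y hi]
  · rw [hA, hAcard, getElem?_pivot]
  · rw [hB, hBcard, getElem?_pivot]

theorem of_filter_lt_eq (hx : x ∈ A) (hy : y ∈ B) (hyx : y < x)
    (h : A.filter (x < ·) = B.filter (y < ·)) : LexLarger A B := by
  obtain ⟨l₁, hA⟩ := exists_sort_eq_append_cons_sort_filter_lt hx
  obtain ⟨l₂, hB⟩ := exists_sort_eq_append_cons_sort_filter_lt hy
  exact .of_sort_eq_append_cons hA (h ▸ hB) hyx

theorem of_toColex_le (h : toColex B ≤ toColex A) : LexLarger A B := by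
  by_cases hBA : B ⊆ A
  · exact .inl hBA
  have hne : toColex B ≠ toColex A := fun e => hBA (toColex_inj.1 e).subset
  obtain ⟨x, hx, habove⟩ := Finset.Colex.lt_iff_exists_filter_lt.1 (h.lt_of_ne hne)
  obtain ⟨hxA, hxB⟩ := Finset.mem_sdiff.1 hx
  have hagree {z : Fin n} (hz : x < z) : z ∈ B ↔ z ∈ A := by
    simpa [hz] using Finset.ext_iff.1 habove z
  have hbelow : (B.filter (· < x)).Nonempty := by
    obtain ⟨z, hzB, hzA⟩ := Finset.not_subset.1 hBA
    have hzx : z ≤ x := not_lt.1 fun hxz => hzA ((hagree hxz).1 hzB)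
    exact ⟨z, Finset.mem_filter.2 ⟨hzB, hzx.lt_of_ne fun e => hxB (e ▸ hzB)⟩⟩
  obtain ⟨y, hy, hymax⟩ := Finset.exists_max_image _ id hbelow
  obtain ⟨hyB, hyx⟩ := Finset.mem_filter.1 hy
  refine .of_filter_lt_eq hxA hyB hyx ?_
  ext z
  simp only [Finset.mem_filter]
  refine ⟨fun ⟨hzA, hxz⟩ => ⟨(hagree hxz).2 hzA, hyx.trans hxz⟩, fun ⟨hzB, hyz⟩ => ?_⟩
  have hzx : ¬ z < x := fun hzx => (hymax z (Finset.mem_filter.2 ⟨hzB, hzx⟩)).not_gt hyz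
  have hxz : x < z := (not_lt.1 hzx).lt_of_ne fun e => hxB (e ▸ hzB)
  exact ⟨(hagree hxz).1 hzB, hxz⟩

end LexLarger

theorem exists_isIlam {n : ℕ} {lam : Fin (n + 1) → ℕ} (h : ∃ I, GoodSet lam I) :
    ∃ I, IsIlam lam I := by
  obtain ⟨I, hI, hmax⟩ := Set.exists_max_image {I | GoodSet lam I} toColex (Set.toFinite _) h
  exact ⟨I, hI, fun J hJ => .of_toColex_le (hmax J hJ)⟩

theorem stronglySequential_of_dvd_chain {n : ℕ} {lam : Fin (n + 1) → ℕ} (hpos : ∀ i, 0 < lam i)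
    (hdvd : ∀ i j, i ≤ j → lam i ∣ lam j) : StronglySequential lam := by
  refine ⟨isSequentialSeq_of_dvd_chain hdvd, ?_⟩
  by_cases hgood : ∃ I, GoodSet lam I
  case neg => exact .inl (not_exists.1 hgood)
  obtain ⟨I, hI⟩ := exists_isIlam hgood
  obtain ⟨hcard, hsum⟩ := hI.1
  have hnontrivial : I.Nontrivial := Finset.one_lt_card_iff_nontrivial.1 hcard
  obtain ⟨q, hq, hmax⟩ := Finset.exists_max_image I id hnontrivial.nonempty
  have hq_dvd : lam q ∣ ∑ i ∈ I, lam i := hsum ▸ hdvd q (Fin.last n) (Fin.le_last q)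
  exact .inr ⟨I, hI, q, hq, hmax, exists_subset_erase_sum_eq_of_dvd_chain (fun i _ => hpos i)
    (fun i _ j _ => hdvd i j) hnontrivial hq hmax hq_dvd⟩

/-- a nondecreasing sequence consisting of `m_i` copies of `b_i`
(`i = 1,…,t`), where each `b_i` divides `b_{i+1}`, is strongly sequential. -/
theorem division_chain_strongly_sequential (t : ℕ) (ht : 1 ≤ t) (b m : Fin t → ℕ)
    (hb : ∀ i, 0 < b i) (hm : ∀ i, 1 ≤ m i)
    (hdvd : ∀ i : Fin t, ∀ h : (i : ℕ) + 1 < t, b i ∣ b ⟨(i : ℕ) + 1, h⟩)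
    (N : ℕ) (lam : Fin (N + 1) → ℕ) (hmono : Monotone lam)
    (hms : Multiset.map lam Finset.univ.val =
      (Finset.univ.val : Multiset (Fin t)).bind
        (fun i => Multiset.replicate (m i) (b i))) :
    StronglySequential lam := by
  have hpos (i) : 0 < lam i := by
    obtain ⟨k, hk⟩ := exists_eq_of_map_eq_bind_replicate hms i
    exact hk ▸ hb k
  have htotal (i j) : lam i ∣ lam j ∨ lam j ∣ lam i := by
    obtain ⟨k, hk⟩ := exists_eq_of_map_eq_bind_replicate hms i
    obtain ⟨l, hl⟩ := exists_eq_of_map_eq_bind_replicate hms j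
    rw [hk, hl]
    exact (le_total k l).imp (dvd_of_le_of_dvd_succ hdvd) (dvd_of_le_of_dvd_succ hdvd)
  exact stronglySequential_of_dvd_chain hpos fun i j hij =>
    dvd_of_dvd_or_dvd_of_le (htotal i j) (hpos i) (hmono hij)
end

section
/- Let t ≥ 1, let a_1 > a_2 > … > a_t ≥ 2 be integers, let k_1,…,k_t ≥ 1 and m ≥ 0 be integers, and assume that a_i > Σ_{j=i+1}^{t} a_j·k_j for every i = 1,…,t. Then the nondecreasing sequence consisting of m copies of 1 together with k_i copies of a_i for each i = 1,…,t is sequential. -/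
/-!
Choose `q ∈ I` maximal in `I ∪ J`, where `I` and `J` have equal sums. If some part of `J` equals
`λ_q`, that part alone will do. Otherwise every part of `J` is smaller than `λ_q`, so by domination
those exceeding `1` have sum at most `λ_q`, while `J` as a whole has sum at least `λ_q`: keep all
the parts exceeding `1` and fill up with parts equal to `1`.
-/

theorem exists_subset_sum_eq_of_le_one {ι : Type*} {f : ι → ℕ} {s : Finset ι} {n : ℕ}
    (hf : ∀ i ∈ s, f i ≤ 1) (hn : n ≤ ∑ i ∈ s, f i) : ∃ u ⊆ s, ∑ i ∈ u, f i = n := by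
  classical
  induction s using Finset.induction_on with
  | empty => exact ⟨∅, subset_rfl, by simp_all⟩
  | insert a s ha ih =>
    rw [Finset.forall_mem_insert] at hf
    rcases le_or_gt n (∑ i ∈ s, f i) with hle | hlt
    · obtain ⟨u, hus, hu⟩ := ih hf.2 hle
      exact ⟨u, hus.trans (Finset.subset_insert a s), hu⟩
    · refine ⟨insert a s, subset_rfl, ?_⟩
      rw [Finset.sum_insert ha] at hn ⊢
      lia

theorem exists_subset_sum_eq_of_sum_one_lt_le {ι : Type*} {f : ι → ℕ} {s : Finset ι} {n : ℕ}
    (hlow : ∑ i ∈ s with 1 < f i, f i ≤ n) (hup : n ≤ ∑ i ∈ s, f i) :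
    ∃ u ⊆ s, ∑ i ∈ u, f i = n := by
  classical
  have hsplit := Finset.sum_filter_add_sum_filter_not s (1 < f ·) f
  obtain ⟨u, hus, hu⟩ : ∃ u ⊆ {i ∈ s | ¬ 1 < f i},
      ∑ i ∈ u, f i = n - ∑ i ∈ s with 1 < f i, f i :=
    exists_subset_sum_eq_of_le_one (fun i hi => not_lt.mp (Finset.mem_filter.mp hi).2) (by lia)
  refine ⟨{i ∈ s | 1 < f i} ∪ u, Finset.union_subset (Finset.filter_subset _ _)
    (hus.trans (Finset.filter_subset _ _)), ?_⟩
  rw [Finset.sum_union ((Finset.disjoint_filter_filter_not s s _).mono_right hus), hu,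
    Nat.add_sub_cancel' hlow]

theorem dominated_sequence_sequential_general {n : ℕ} {lam : Fin n → ℕ} (hmono : Monotone lam)
    (hdom : ∀ q, ∑ p with 1 < lam p ∧ lam p < lam q, lam p ≤ lam q) : IsSequentialSeq lam := by
  intro I J hIJ q hq hmax
  by_cases hmem : ∃ j ∈ J, lam j = lam q
  · obtain ⟨j, hj, hjq⟩ := hmem
    exact ⟨{j}, Finset.singleton_subset_iff.mpr hj, by rw [Finset.sum_singleton, hjq]⟩
  push Not at hmem
  have hlt : ∀ j ∈ J, lam j < lam q := fun j hj =>
    (hmono (hmax j (Finset.mem_union_right I hj))).lt_of_ne (hmem j hj)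
  have hlow : ∑ j ∈ J with 1 < lam j, lam j ≤ lam q := by
    refine (Finset.sum_le_sum_of_subset fun j hj => ?_).trans (hdom q)
    obtain ⟨hjJ, hj⟩ := Finset.mem_filter.mp hj
    exact Finset.mem_filter.mpr ⟨Finset.mem_univ j, hj, hlt j hjJ⟩
  have hup : lam q ≤ ∑ j ∈ J, lam j := hIJ ▸ Finset.single_le_sum_of_canonicallyOrdered hq
  obtain ⟨J', hJ', hsum⟩ := exists_subset_sum_eq_of_sum_one_lt_le hlow hup
  exact ⟨J', hJ', hsum.symm⟩

section Multiplicities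

variable {κ ι α : Type*} [Fintype κ] [Fintype ι] {f : κ → α} {a : ι → α} {k : ι → ℕ} {m : ℕ}
  {c : α}

theorem eq_or_exists_eq_of_map_eq_replicate_add_bind
    (hf : Multiset.map f Finset.univ.val = Multiset.replicate m c +
      (Finset.univ.val : Multiset ι).bind fun i => Multiset.replicate (k i) (a i)) (p : κ) :
    f p = c ∨ ∃ i, f p = a i := by
  have hp : f p ∈ Multiset.map f Finset.univ.val := Multiset.mem_map_of_mem f (Finset.mem_univ p)
  rw [hf, Multiset.mem_add, Multiset.mem_bind] at hp
  exact hp.imp Multiset.eq_of_mem_replicate fun ⟨i, _, hi⟩ => ⟨i, Multiset.eq_of_mem_replicate hi⟩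

theorem sum_comp_of_map_eq_replicate_add_bind {M : Type*} [AddCommMonoid M]
    (hf : Multiset.map f Finset.univ.val = Multiset.replicate m c +
      (Finset.univ.val : Multiset ι).bind fun i => Multiset.replicate (k i) (a i)) (g : α → M) :
    ∑ p, g (f p) = m • g c + ∑ i, k i • g (a i) := by
  calc ∑ p, g (f p) = (Multiset.map g (Multiset.map f Finset.univ.val)).sum := by
        rw [Multiset.map_map]; rfl
    _ = m • g c + ∑ i, k i • g (a i) := by
        rw [hf, Multiset.map_add, Multiset.sum_add, Multiset.map_bind, Multiset.sum_bind]
        simp only [Multiset.map_replicate, Multiset.sum_replicate, Finset.sum]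

end Multiplicities

theorem sum_one_lt_lt_le_of_map_eq_replicate_add_bind {κ ι : Type*} [Fintype κ] [Fintype ι]
    {f : κ → ℕ} {a k : ι → ℕ} {m : ℕ}
    (hdom : ∀ i, ∑ j with a j < a i, a j * k j ≤ a i)
    (hf : Multiset.map f Finset.univ.val = Multiset.replicate m 1 +
      (Finset.univ.val : Multiset ι).bind fun i => Multiset.replicate (k i) (a i)) (q : κ) :
    ∑ p with 1 < f p ∧ f p < f q, f p ≤ f q := by
  rcases eq_or_exists_eq_of_map_eq_replicate_add_bind hf q with hq | ⟨i, hq⟩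
  · rw [hq, Finset.filter_false_of_mem fun p _ h => h.1.not_gt h.2, Finset.sum_empty]
    exact zero_le
  calc ∑ p with 1 < f p ∧ f p < f q, f p
      = ∑ p, if 1 < f p ∧ f p < a i then f p else 0 := by rw [Finset.sum_filter, hq]
    _ = ∑ j, k j * if 1 < a j ∧ a j < a i then a j else 0 := by
        simpa using sum_comp_of_map_eq_replicate_add_bind hf
          fun x => if 1 < x ∧ x < a i then x else 0
    _ = ∑ j with 1 < a j ∧ a j < a i, a j * k j := by
        simp only [Finset.sum_filter, mul_ite, mul_zero, mul_comm]
    _ ≤ ∑ j with a j < a i, a j * k j :=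
        Finset.sum_le_sum_of_subset (Finset.monotone_filter_right _ fun _ _ h => h.2)
    _ ≤ f q := (hdom i).trans_eq hq.symm

/-- a nondecreasing sequence of `m` copies of `1` and `k_i` copies
of `a_i`, where `a_1 > … > a_t ≥ 2` and `a_i > Σ_{j>i} a_j k_j` for all `i`, is
sequential. -/
theorem dominated_sequence_sequential (t : ℕ) (ht : 1 ≤ t) (a k : Fin t → ℕ)
    (ha2 : ∀ i, 2 ≤ a i) (hdec : ∀ i j : Fin t, i < j → a j < a i)
    (hk : ∀ i, 1 ≤ k i) (m : ℕ)
    (hdom : ∀ i : Fin t, (∑ j ∈ Finset.univ.filter (fun j => i < j), a j * k j) < a i)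
    (N : ℕ) (lam : Fin N → ℕ) (hmono : Monotone lam)
    (hms : Multiset.map lam Finset.univ.val =
      Multiset.replicate m 1 +
        (Finset.univ.val : Multiset (Fin t)).bind
          (fun i => Multiset.replicate (k i) (a i))) :
    IsSequentialSeq lam :=
  dominated_sequence_sequential_general hmono <| sum_one_lt_lt_le_of_map_eq_replicate_add_bind
    (fun i => by simpa only [StrictAnti.lt_iff_gt @hdec] using (hdom i).le) hms
end

section
/- Let a, b, l, m, r be positive integers with b ≥ 2, a = b·l + r, m ≥ r, and l ≥ 2. Then the nondecreasing sequence (1^m, b^l, a), consisting of m copies of 1, l copies of b, and one copy of a, is strongly sequential. -/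
/-!
`LexLarger` is the colexicographic order on finite sets: two sets are compared at the greatest
element of their symmetric difference. If `λ` is positive, no set with sum `λ_n` properly contains
another one, and those with at least two elements avoid the index `n`. An interval `[lo, n)` is
colexicographically maximal among the sets of indices below `n` that do not properly contain it,
so as soon as its sum is `λ_n` it is `I(λ)`. For `(1^m, b^l, a)` the last `r` ones together with
all the `b`s form such an interval, and since `l ≥ 2` its greatest entry `b` occurs in it twice.

For sequentiality, unless `λ_q` occurs in `J`, all entries indexed by `J` are smaller than `λ_q`.
Those exceeding `1` sum to at most `λ_q` — they are `b`s, and `b * l ≤ a` — while the whole sum is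
at least `λ_q`, so `λ_q` is reached by adding ones.
-/

section SubsetSums

theorem exists_subset_sum_eq_of_le_one_s12 {ι : Type*} {f : ι → ℕ} {S J : Finset ι} {t : ℕ}
    (hSJ : S ⊆ J) (hone : ∀ j ∈ J, j ∉ S → f j ≤ 1)
    (hlo : ∑ j ∈ S, f j ≤ t) (hhi : t ≤ ∑ j ∈ J, f j) :
    ∃ U, S ⊆ U ∧ U ⊆ J ∧ t = ∑ j ∈ U, f j := by
  classical
  obtain ⟨U, hUJ, hU⟩ := exists_minimal_le_of_wellFoundedLT
    (fun U : Finset ι => S ⊆ U ∧ t ≤ ∑ j ∈ U, f j) J ⟨hSJ, hhi⟩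
  refine ⟨U, hU.prop.1, hUJ, hU.prop.2.antisymm ?_⟩
  by_contra! hlt
  obtain ⟨x, hxU, hxS⟩ := Finset.exists_of_ssubset
    (hU.prop.1.ssubset_of_ne (by rintro rfl; omega))
  have hadd : ∑ j ∈ U.erase x, f j + f x = ∑ j ∈ U, f j := Finset.sum_erase_add U f hxU
  have hx : f x ≤ 1 := hone x (hUJ hxU) hxS
  exact hU.not_prop_of_lt (Finset.erase_ssubset hxU)
    ⟨Finset.subset_erase.2 ⟨hU.prop.1, hxS⟩, by omega⟩

theorem isSequentialSeq_of_sum_le {n : ℕ} {lam : Fin n → ℕ} (hmono : Monotone lam)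
    (hsum : ∀ q, ∑ i with 1 < lam i ∧ lam i < lam q, lam i ≤ lam q) : IsSequentialSeq lam := by
  intro I J hIJ q hq hmax
  by_cases hp : ∃ p ∈ J, lam p = lam q
  · obtain ⟨p, hpJ, hpq⟩ := hp
    exact ⟨{p}, Finset.singleton_subset_iff.2 hpJ, by rw [Finset.sum_singleton, hpq]⟩
  push Not at hp
  have hlt : ∀ j ∈ J, lam j < lam q := fun j hj =>
    (hmono (hmax j (Finset.mem_union_right I hj))).lt_of_ne (hp j hj)
  have hle : lam q ≤ ∑ j ∈ J, lam j :=
    (Finset.single_le_sum_of_canonicallyOrdered hq).trans hIJ.le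
  have hlarge : ∑ j ∈ J with 1 < lam j, lam j ≤ lam q := by
    refine (Finset.sum_le_sum_of_subset fun j hj => ?_).trans (hsum q)
    obtain ⟨hjJ, hj⟩ := Finset.mem_filter.1 hj
    exact Finset.mem_filter.2 ⟨Finset.mem_univ j, hj, hlt j hjJ⟩
  obtain ⟨U, -, hUJ, hU⟩ := exists_subset_sum_eq_of_le_one_s12 (Finset.filter_subset _ J)
    (fun j hj hjS => not_lt.1 fun h => hjS (Finset.mem_filter.2 ⟨hj, h⟩)) hlarge hle
  exact ⟨U, hUJ, hU⟩

end SubsetSums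

section Colex

open Finset.Colex

variable {α : Type*} [LinearOrder α]

theorem sort_eq_sort_filter_append (s : Finset α) (w : α) :
    s.sort = (s.filter (· ≤ w)).sort ++ (s.filter (w < ·)).sort := by
  refine List.Perm.eq_of_pairwise' (s.pairwise_sort (· ≤ ·)) (List.pairwise_append.2
    ⟨Finset.pairwise_sort _ _, Finset.pairwise_sort _ _, fun x hx y hy => ?_⟩) ?_
  · rw [Finset.mem_sort, Finset.mem_filter] at hx hy
    exact hx.2.trans hy.2.le
  · rw [← Multiset.coe_eq_coe, ← Multiset.coe_add]
    simp only [Finset.sort_eq, Finset.filter_val, ← not_le, Multiset.filter_add_not]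

theorem getElem?_sort_of_lt_card_filter {s : Finset α} {w : α} {i : ℕ}
    (hi : i < (s.filter (w < ·)).card) :
    s.sort[s.card - 1 - i]? =
      (s.filter (w < ·)).sort[(s.filter (w < ·)).card - 1 - i]? := by
  have hcard : s.card = (s.filter (· ≤ w)).card + (s.filter (w < ·)).card := by
    simpa only [List.length_append, Finset.length_sort] using
      congrArg List.length (sort_eq_sort_filter_append s w)
  rw [sort_eq_sort_filter_append s w,
    List.getElem?_append_right (by rw [Finset.length_sort]; omega), Finset.length_sort]
  congr 1
  omega

theorem getElem?_sort_card_filter {s : Finset α} {w : α} (h : (s.filter (· ≤ w)).Nonempty) :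
    s.sort[s.card - 1 - (s.filter (w < ·)).card]? = some ((s.filter (· ≤ w)).max' h) := by
  have hcard : s.card = (s.filter (· ≤ w)).card + (s.filter (w < ·)).card := by
    simpa only [List.length_append, Finset.length_sort] using
      congrArg List.length (sort_eq_sort_filter_append s w)
  have hpos := h.card_pos
  rw [sort_eq_sort_filter_append s w,
    List.getElem?_append_left (by rw [Finset.length_sort]; omega),
    Finset.max'_eq_sorted_last, List.getElem?_eq_some_iff]
  refine ⟨by rw [Finset.length_sort]; omega, ?_⟩
  congr 1
  rw [Finset.length_sort]
  omega

theorem lexLarger_of_toColex_le {n : ℕ} {A B : Finset (Fin n)} (h : toColex B ≤ toColex A) :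
    LexLarger A B := by
  by_cases hBA : B ⊆ A
  · exact Or.inl hBA
  have hlt : toColex B < toColex A := h.lt_of_ne fun heq => hBA (toColex.injective heq).subset
  obtain ⟨w, hw, hfilter⟩ := lt_iff_exists_filter_lt.1 hlt
  obtain ⟨hwA, hwB⟩ := Finset.mem_sdiff.1 hw
  obtain ⟨y, hyB, hyA⟩ := Finset.not_subset.1 hBA
  have hyw : y ≤ w := by
    by_contra! hwy
    exact hyA (Finset.filter_subset _ _ (hfilter ▸ Finset.mem_filter.2 ⟨hyB, hwy⟩))
  have hA : (A.filter (· ≤ w)).Nonempty := ⟨w, Finset.mem_filter.2 ⟨hwA, le_rfl⟩⟩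
  have hB : (B.filter (· ≤ w)).Nonempty := ⟨y, Finset.mem_filter.2 ⟨hyB, hyw⟩⟩
  have hAtop : (A.filter (w < ·)).card < A.card :=
    Finset.card_lt_card (Finset.filter_ssubset.2 ⟨w, hwA, lt_irrefl w⟩)
  have hBtop : (B.filter (w < ·)).card < B.card :=
    Finset.card_lt_card (Finset.filter_ssubset.2 ⟨y, hyB, hyw.not_gt⟩)
  refine Or.inr ⟨(A.filter (w < ·)).card, lt_min hAtop (hfilter ▸ hBtop), fun i hi => ?_,
    _, _, getElem?_sort_card_filter hA, hfilter ▸ getElem?_sort_card_filter hB, ?_⟩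
  · have hiB : i < (B.filter (w < ·)).card := hfilter ▸ hi
    rw [getElem?_sort_of_lt_card_filter hi, getElem?_sort_of_lt_card_filter hiB, hfilter]
  · obtain ⟨hmem, hle⟩ := Finset.mem_filter.1 (Finset.max'_mem _ hB)
    calc (B.filter (· ≤ w)).max' hB < w := hle.lt_of_ne (ne_of_mem_of_not_mem hmem hwB)
      _ ≤ (A.filter (· ≤ w)).max' hA :=
        Finset.le_max' (A.filter (· ≤ w)) w (Finset.mem_filter.2 ⟨hwA, le_rfl⟩)

theorem toColex_le_toColex_Ico [LocallyFiniteOrder α] {lo hi : α} {B : Finset α}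
    (hB : ∀ x ∈ B, x < hi) (hss : ¬ Finset.Ico lo hi ⊂ B) :
    toColex B ≤ toColex (Finset.Ico lo hi) := by
  refine toColex_le_toColex.2 fun x hxB hx => ?_
  have hxlo : x < lo := by
    by_contra! hlox
    exact hx (Finset.mem_Ico.2 ⟨hlox, hB x hxB⟩)
  obtain ⟨y, hy, hyB⟩ := Finset.not_subset.1 fun h => hss ⟨h, fun hBI => hx (hBI hxB)⟩
  exact ⟨y, hy, hyB, hxlo.le.trans (Finset.mem_Ico.1 hy).1⟩

end Colex

section GoodSets

variable {n : ℕ} {lam : Fin (n + 1) → ℕ}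

theorem GoodSet.lt_last (hpos : ∀ i, 0 < lam i) {I : Finset (Fin (n + 1))} (hI : GoodSet lam I) :
    ∀ x ∈ I, x < Fin.last n := by
  refine fun x hx => (Fin.le_last x).lt_of_ne ?_
  rintro rfl
  obtain ⟨y, hy, hne⟩ := Finset.exists_mem_ne hI.1 (Fin.last n)
  have hlt : lam (Fin.last n) < ∑ i ∈ I, lam i :=
    Finset.single_lt_sum hne hx hy (hpos y) fun _ _ _ => Nat.zero_le _
  exact hlt.ne' hI.2

theorem GoodSet.not_ssubset (hpos : ∀ i, 0 < lam i) {I J : Finset (Fin (n + 1))}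
    (hI : GoodSet lam I) (hJ : GoodSet lam J) : ¬ I ⊂ J := by
  intro hIJ
  obtain ⟨x, hxJ, hxI⟩ := Finset.exists_of_ssubset hIJ
  have hlt : ∑ i ∈ I, lam i < ∑ i ∈ J, lam i :=
    Finset.sum_lt_sum_of_subset hIJ.1 hxJ hxI (hpos x) fun _ _ _ => Nat.zero_le _
  exact hlt.ne (hI.2.trans hJ.2.symm)

theorem isIlam_Ico (hpos : ∀ i, 0 < lam i) {lo : Fin (n + 1)}
    (hgood : GoodSet lam (Finset.Ico lo (Fin.last n))) :
    IsIlam lam (Finset.Ico lo (Fin.last n)) :=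
  ⟨hgood, fun _ hJ => lexLarger_of_toColex_le
    (toColex_le_toColex_Ico (hJ.lt_last hpos) (hgood.not_ssubset hpos hJ))⟩

theorem stronglySequential_of_goodSet_Ico (hseq : IsSequentialSeq lam) (hpos : ∀ i, 0 < lam i)
    {lo p q : Fin (n + 1)} (hgood : GoodSet lam (Finset.Ico lo (Fin.last n)))
    (hlo : lo ≤ p) (hpq : p < q) (hq : q ⋖ Fin.last n) (heq : lam p = lam q) :
    StronglySequential lam := by
  have hp_mem : p ∈ (Finset.Ico lo (Fin.last n)).erase q :=
    Finset.mem_erase.2 ⟨hpq.ne, Finset.mem_Ico.2 ⟨hlo, hpq.trans hq.lt⟩⟩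
  have hq_mem : q ∈ Finset.Ico lo (Fin.last n) := Finset.mem_Ico.2 ⟨hlo.trans hpq.le, hq.lt⟩
  exact ⟨hseq, Or.inr ⟨_, isIlam_Ico hpos hgood, q, hq_mem,
    fun x hx => hq.le_of_lt (Finset.mem_Ico.1 hx).2,
    {p}, Finset.singleton_subset_iff.2 hp_mem, by rw [Finset.sum_singleton, heq]⟩⟩

end GoodSets

/-- The sequence `(1^m, b^l, a)`: positions `0, …, m - 1` carry `1`, the next `l` carry `b`, and
the last one carries `a`. -/
def ablSeq (a b l m : ℕ) : Fin (m + l + 1) → ℕ := fun i =>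
  if (i : ℕ) < m then 1 else if (i : ℕ) < m + l then b else a

namespace ablSeq

variable {a b l m : ℕ}

theorem eq_one {i : Fin (m + l + 1)} (hi : (i : ℕ) < m) : ablSeq a b l m i = 1 := if_pos hi

theorem eq_b {i : Fin (m + l + 1)} (hmi : m ≤ i) (hi : (i : ℕ) < m + l) :
    ablSeq a b l m i = b := by
  rw [ablSeq, if_neg hmi.not_gt, if_pos hi]

theorem eq_last : ablSeq a b l m (Fin.last (m + l)) = a := by
  simp [ablSeq]

theorem pos (ha : 0 < a) (hb : 0 < b) (i : Fin (m + l + 1)) : 0 < ablSeq a b l m i := by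
  unfold ablSeq
  split_ifs <;> omega

theorem monotone (hb : 0 < b) (hba : b ≤ a) : Monotone (ablSeq a b l m) := by
  intro i j hij
  rw [Fin.le_def] at hij
  unfold ablSeq
  split_ifs <;> omega

theorem sum_Ico_b :
    ∑ i ∈ Finset.Ico ⟨m, by omega⟩ (Fin.last (m + l)), ablSeq a b l m i = b * l := by
  rw [Finset.sum_congr rfl fun i hi => eq_b (Finset.mem_Ico.1 hi).1 (Finset.mem_Ico.1 hi).2,
    Finset.sum_const, Fin.card_Ico, Fin.val_last, Nat.add_sub_cancel_left, smul_eq_mul, mul_comm]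

theorem sum_Ico_one {r : ℕ} (hr : r ≤ m) :
    ∑ i ∈ Finset.Ico ⟨m - r, by omega⟩ ⟨m, by omega⟩, ablSeq a b l m i = r := by
  rw [Finset.sum_congr rfl fun i hi => eq_one (Finset.mem_Ico.1 hi).2, Finset.sum_const,
    Fin.card_Ico, Nat.sub_sub_self hr, smul_eq_mul, mul_one]

theorem isSequentialSeq (hb : 0 < b) (hba : b ≤ a) (hbl : b * l ≤ a) :
    IsSequentialSeq (ablSeq a b l m) := by
  refine isSequentialSeq_of_sum_le (monotone hb hba) fun q => ?_
  have hval (i : Fin (m + l + 1)) (h1 : 1 < ablSeq a b l m i)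
      (hq : ablSeq a b l m i < ablSeq a b l m q) :
      (m ≤ i ∧ (i : ℕ) < m + l) ∧ ablSeq a b l m q = a := by
    unfold ablSeq at h1 hq ⊢
    split_ifs at h1 hq ⊢ <;> omega
  rcases eq_or_ne (ablSeq a b l m q) a with hqa | hqa
  · calc ∑ i with 1 < ablSeq a b l m i ∧ ablSeq a b l m i < ablSeq a b l m q, ablSeq a b l m i
      _ ≤ ∑ i ∈ Finset.Ico ⟨m, by omega⟩ (Fin.last (m + l)), ablSeq a b l m i :=
        Finset.sum_le_sum_of_subset fun i hi =>
          have hi := (Finset.mem_filter.1 hi).2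
          Finset.mem_Ico.2 (hval i hi.1 hi.2).1
      _ = b * l := sum_Ico_b
      _ ≤ ablSeq a b l m q := hbl.trans hqa.ge
  · rw [Finset.filter_false_of_mem fun i _ hi => hqa (hval i hi.1 hi.2).2, Finset.sum_empty]
    exact Nat.zero_le _

theorem goodSet_Ico {r : ℕ} (hr : r ≤ m) (hlr : 2 ≤ l + r) :
    GoodSet (ablSeq (b * l + r) b l m) (Finset.Ico ⟨m - r, by omega⟩ (Fin.last (m + l))) := by
  refine ⟨by simp only [Fin.card_Ico, Fin.val_last]; omega, ?_⟩
  have hle : (⟨m - r, by omega⟩ : Fin (m + l + 1)) ≤ ⟨m, by omega⟩ := Nat.sub_le m r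
  rw [← Finset.Ico_union_Ico_eq_Ico hle (Fin.le_last _),
    Finset.sum_union (Finset.Ico_disjoint_Ico_consecutive _ _ _), sum_Ico_one hr, sum_Ico_b,
    eq_last, add_comm]

end ablSeq

/-- the nondecreasing sequence `(1^m, b^l, a)` with `b ≥ 2`,
`a = b·l + r`, `m ≥ r ≥ 1` and `l ≥ 2` is strongly sequential. -/
theorem abl_strongly_sequential (a b l m r : ℕ)
    (hb : 2 ≤ b) (hr : 1 ≤ r) (ha : a = b * l + r) (hm : r ≤ m) (hl : 2 ≤ l) :
    StronglySequential (fun i : Fin (m + l + 1) =>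
      if (i : ℕ) < m then 1 else if (i : ℕ) < m + l then b else a) := by
  subst ha
  have hb_le : b ≤ b * l := Nat.le_mul_of_pos_right b (by omega)
  refine stronglySequential_of_goodSet_Ico (lam := ablSeq (b * l + r) b l m)
    (p := ⟨m + l - 2, by omega⟩) (q := ⟨m + l - 1, by omega⟩)
    (ablSeq.isSequentialSeq (by omega) (by omega) (by omega))
    (ablSeq.pos (by omega) (by omega)) (ablSeq.goodSet_Ico hm (by omega)) ?_ ?_ ?_ ?_
  · exact Fin.mk_le_mk.2 (by omega)
  · exact Fin.mk_lt_mk.2 (by omega)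
  · exact Fin.covBy_iff.2 (Nat.covBy_iff_add_one_eq.2 (Nat.sub_add_cancel (by omega)))
  · rw [ablSeq.eq_b, ablSeq.eq_b] <;> dsimp only <;> omega
end

section
/- Let b, d, m be positive integers and let x, y ≥ 0 and ε_1, ε_2 ∈ {0,1} be integers such that m = b·x + ε_1 and m − d = (b+d)·y + ε_2. Then 2x + ε_1 > 2y + ε_2. -/
/-!
Subtracting the two representations gives `b * (x - y) + (ε₁ - ε₂) = d * (y + 1) > 0`. As
`ε₁ - ε₂ ≤ 1 ≤ b`, this forces `x - y ≥ 0`; with equality, `ε₁ - ε₂` itself is positive. If instead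
`x - y ≥ 1`, then `2 * (x - y) ≥ 2 > ε₂ - ε₁`. In both cases the coefficient `b` may be replaced
by `2` without losing positivity.
-/

section OrderedRing

variable {R : Type*} [CommRing R] [LinearOrder R] [IsStrictOrderedRing R]

theorem nonneg_of_mul_intCast_add_pos {b e : R} {k : ℤ} (hb : 0 ≤ b) (heb : e ≤ b)
    (h : 0 < b * k + e) : 0 ≤ k := by
  have hbk : 0 < b * ((k + 1 : ℤ) : R) := by
    push_cast
    linarith
  exact Int.lt_add_one_iff.mp (Int.cast_pos.mp (pos_of_mul_pos_right hbk hb))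

theorem mul_intCast_add_pos_of_mul_intCast_add_pos {b c e : R} {k : ℤ} (hb : 0 ≤ b) (heb : e ≤ b)
    (hc : 0 ≤ c) (hce : -c < e) (h : 0 < b * k + e) : 0 < c * k + e := by
  obtain rfl | hk := (nonneg_of_mul_intCast_add_pos hb heb h).eq_or_lt
  · simpa using h
  · have hk_one : (1 : R) ≤ k := mod_cast hk
    calc
      0 < c + e := neg_lt_iff_pos_add'.mp hce
      _ ≤ c * k + e := by gcongr; exact le_mul_of_one_le_right hc hk_one

theorem two_x_gt_two_y_general {b d ε₁ ε₂ : R} {x y : ℤ} (hb : 0 ≤ b) (hd : 0 < d) (hy : 0 ≤ y)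
    (hεb : ε₁ - ε₂ ≤ b) (hε : -2 < ε₁ - ε₂) (h : b * x + ε₁ - d = (b + d) * y + ε₂) :
    2 * y + ε₂ < 2 * x + ε₁ := by
  have hdy : 0 < d * (y + 1 : R) := mul_pos hd (mod_cast Int.lt_add_one_iff.mpr hy)
  have hdiff : b * ((x - y : ℤ) : R) + (ε₁ - ε₂) = d * (y + 1) := by
    push_cast
    linear_combination h
  have hpos : 0 < 2 * ((x - y : ℤ) : R) + (ε₁ - ε₂) :=
    mul_intCast_add_pos_of_mul_intCast_add_pos hb hεb zero_le_two hε (hdiff ▸ hdy)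
  push_cast at hpos
  linarith

end OrderedRing

/-- if `m = b·x + ε₁` and `m − d = (b+d)·y + ε₂` with `b, d, m` positive,
`x, y ≥ 0` and `ε₁, ε₂ ∈ {0,1}`, then `2x + ε₁ > 2y + ε₂`. -/
theorem two_x_gt_two_y (b d m x y ε₁ ε₂ : ℤ)
    (hb : 0 < b) (hd : 0 < d) (hm : 0 < m) (hx : 0 ≤ x) (hy : 0 ≤ y)
    (hε₁ : ε₁ = 0 ∨ ε₁ = 1) (hε₂ : ε₂ = 0 ∨ ε₂ = 1)
    (h1 : m = b * x + ε₁) (h2 : m - d = (b + d) * y + ε₂) :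
    2 * y + ε₂ < 2 * x + ε₁ := by
  subst h1
  exact two_x_gt_two_y_general hb.le hd hy (by lia) (by lia) h2
end
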